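/- (Embedding theorem, Hamiltonian part) Let ε = sup_{(P,q)∈D} max(|∂_P S(P,q)|, |∂_q S(P,q)|) and suppose m = ⌊δ/(6eε) − d⌋ ≥ 1. Then there is a Hamiltonian vector field X̂_m = J∇H_m, with H_m analytic on D₁, such that ‖X̂_m − X_m‖_{D₁} ≤ 4 e^{d+1} ε · exp(−δ/(6eε)), ‖Φ_{X̂_m} − f‖_{D₀} ≤ 5 e^{d+1} ε · exp(−δ/(6eε)), ‖X̂_m‖_{D₁} ≤ 4ε, and ‖X̂_m − J∇S‖_{D₁} ≤ 17(d+3)² ε²/δ, where J is the standard symplectic matrix on ℂ^{2d}. -/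

import Mathlib

/-- Complex phase space `ℂ^d × ℂ^d ≅ ℂ^{2d}` with the sup norm. -/
abbrev CPhase (d : ℕ) := (Fin d → ℂ) × (Fin d → ℂ)

/-- Partial gradient `∂_P S` of `S` in the first block of `d` variables. -/
noncomputable def pGrad (d : ℕ) (S : CPhase d → ℂ) (x : CPhase d) : Fin d → ℂ :=
  fun i => fderiv ℂ S x (Pi.single i 1, 0)

/-- Partial gradient `∂_q S` of `S` in the second block of `d` variables. -/
noncomputable def qGrad (d : ℕ) (S : CPhase d → ℂ) (x : CPhase d) : Fin d → ℂ :=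
  fun i => fderiv ℂ S x (0, Pi.single i 1)

/-- The Hamiltonian vector field `J ∇H = (−∂_q H, ∂_p H)` of a Hamiltonian `H`. -/
noncomputable def hamVF (d : ℕ) (H : CPhase d → ℂ) (x : CPhase d) : CPhase d :=
  (-(qGrad d H x), pGrad d H x)

/-- Newton finite differences of a map `f`: `Δ₀(x) = x`,
`Δ_k(x) = Δ_{k−1}(f(x)) − Δ_{k−1}(x)`. -/
def finDiff {α : Type*} [AddCommGroup α] (f : α → α) : ℕ → α → α
  | 0, x => x
  | k + 1, x => finDiff f k (f x) - finDiff f k x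

/-- The interpolating vector field of order `m`:
`X_m(x) = Σ_{k=1}^m ((−1)^{k−1}/k) Δ_k(x)`. -/
noncomputable def interpVF (d : ℕ) (f : CPhase d → CPhase d) (m : ℕ) (x : CPhase d) :
    CPhase d :=
  ∑ k ∈ Finset.Icc 1 m, ((-1 : ℂ) ^ (k - 1) / k) • finDiff f k x

/-!
The map `f` is embedded in the family of symplectic maps `F (μ, ·)` generated by
`P · q + μ S(P, q)`, so that `F (0, ·) = id` and `F (1, ·) = f`. Cauchy's estimate shows that `Δ_k`
is at most `|μ| ε 2 ^ (1 - k)` as long as `D` leaves room for it. Hence the interpolating field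
`X_m (μ, ·)`, a truncated logarithm series in the differences, is analytic in `μ` and of size
`2 |μ| ε` on a disc of radius of order `δ / (m ε)`, and `X̂_m` is its Taylor polynomial of degree
`m` in `μ`, at `μ = 1`.

The maps `F (μ, ·)` are exact symplectic: `P · dQ - p · dq = dA` with the action
`A = μ (P · ∂_P S - S)`. Applying the truncated logarithm to the corresponding identity for the
iterates shows that `X_m (μ, ·)` is Hamiltonian up to an error `O(μ ^ (m + 1))`, which the Taylor
truncation removes, so that `X̂_m` is exactly Hamiltonian.

The choice of `m` makes room for discs of radius `2 e`, so Cauchy's estimates bound the Taylor tail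
`X_m - X̂_m` by a multiple of `ε e ^ (-m)`. The Newton interpolation polynomial of the orbit of
`x`, as a curve from `x` to `f x`, solves the equation of the flow of `X̂_m` up to an error which
is again `O(μ ^ (m + 1))`, hence of the same size at `μ = 1`, and Grönwall's inequality compares it
with the flow itself.
-/

open Filter Topology Asymptotics ContDiff

namespace HamiltonianEmbedding

theorem isBigO_pow_of_le {m n : ℕ} (h : m ≤ n) :
    (fun μ : ℂ => μ ^ n) =O[𝓝 0] fun μ : ℂ => μ ^ m := by
  obtain rfl | h := h.eq_or_lt
  exacts [isBigO_refl _ _, (isLittleO_pow_pow h).isBigO]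

section TaylorCoefficients

variable {E F : Type*} [NormedAddCommGroup E] [NormedSpace ℂ E] [NormedAddCommGroup F]
  [NormedSpace ℂ F] [CompleteSpace E]

/-- The Taylor coefficient of order `j` at `0` of a curve `g : ℂ → E`. -/
noncomputable def taylorCoeff {E : Type*} [NormedAddCommGroup E] [NormedSpace ℂ E] (j : ℕ)
    (g : ℂ → E) : E :=
  (j.factorial : ℂ)⁻¹ • iteratedDeriv j g 0

theorem norm_taylorCoeff_le {g : ℂ → E} {R M : ℝ} (hR : 0 < R)
    (hg : ∀ z, ‖z‖ ≤ R → DifferentiableAt ℂ g z) (hM : ∀ z, ‖z‖ ≤ R → ‖g z‖ ≤ M) (j : ℕ) :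
    ‖taylorCoeff j g‖ ≤ M / R ^ j := by
  have hg' : DifferentiableOn ℂ g (closure (Metric.ball 0 R)) := fun z hz =>
    (hg z (mem_closedBall_zero_iff.1
      (Metric.closure_ball_subset_closedBall hz))).differentiableWithinAt
  have h := Complex.norm_iteratedDeriv_le_of_forall_mem_sphere_norm_le j hR hg'.diffContOnCl
    fun z hz => hM z (mem_sphere_zero_iff_norm.1 hz).le
  rw [taylorCoeff, norm_smul, norm_inv, Complex.norm_natCast,
    inv_mul_le_iff₀ (by positivity : (0 : ℝ) < j.factorial), ← mul_div_assoc]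
  exact h

theorem norm_sub_sum_taylorCoeff_le {g : ℂ → E} {R M : ℝ} (hR : 1 < R)
    (hg : ∀ z, ‖z‖ ≤ R → DifferentiableAt ℂ g z) (hM : ∀ z, ‖z‖ ≤ R → ‖g z‖ ≤ M) (n : ℕ) :
    ‖g 1 - ∑ j ∈ Finset.range n, taylorCoeff j g‖ ≤ M / R ^ n / (1 - 1 / R) := by
  have hR0 : 0 < R := one_pos.trans hR
  have hg' : DifferentiableOn ℂ g (Metric.ball 0 R) := fun z hz =>
    (hg z (mem_ball_zero_iff.1 hz).le).differentiableWithinAt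
  have htaylor : HasSum (fun j => taylorCoeff j g) (g 1) := by
    simpa [taylorCoeff] using
      Complex.hasSum_taylorSeries_on_ball hg' (z := 1) (by simpa using hR)
  have hgeom : HasSum (fun j => M / R ^ n * (1 / R) ^ j) (M / R ^ n * (1 - 1 / R)⁻¹) :=
    (hasSum_geometric_of_lt_one (by positivity) ((div_lt_one hR0).2 hR)).mul_left _
  rw [← ((hasSum_nat_add_iff' n).2 htaylor).tsum_eq, div_eq_mul_inv (M / R ^ n)]
  refine tsum_of_norm_bounded hgeom fun j => (norm_taylorCoeff_le hR0 hg hM _).trans_eq ?_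
  rw [pow_add, one_div, inv_pow]
  field

theorem taylorCoeff_eq_zero_of_isBigO {g : ℂ → E} (hg : AnalyticAt ℂ g 0) {n : ℕ}
    (hO : g =O[𝓝 0] fun μ : ℂ => μ ^ n) {j : ℕ} (hj : j < n) : taylorCoeff j g = 0 := by
  obtain ⟨p, r, hp⟩ := hg
  suffices h : ∀ i < n, ∀ y : ℂ, (p i fun _ => y) = 0 by
    have hfac := hp.factorial_smul 1 j
    rw [h j hj, smul_zero, ← iteratedDeriv_eq_iteratedFDeriv] at hfac
    rw [taylorCoeff, ← hfac, smul_zero]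
  intro i
  induction i using Nat.strong_induction_on with
  | _ i ih =>
    intro hi y
    refine IsBigO.continuousMultilinearMap_apply_eq_zero ?_ y
    have hrem := hp.hasFPowerSeriesAt.isBigO_sub_partialSum_pow (i + 1)
    have hsum : ∀ z : ℂ, p.partialSum (i + 1) z = p i fun _ => z := fun z => by
      rw [FormalMultilinearSeries.partialSum, Finset.sum_range_succ,
        Finset.sum_eq_zero fun k hk => ih k (Finset.mem_range.1 hk)
          ((Finset.mem_range.1 hk).trans hi) z, zero_add]
    simp only [zero_add, hsum] at hrem
    have hO' : g =O[𝓝 0] fun z : ℂ => ‖z‖ ^ (i + 1) := by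
      simpa only [norm_pow] using (hO.trans (isBigO_pow_of_le hi)).norm_right
    simpa using hO'.sub hrem

theorem taylorCoeff_continuousLinearMap_comp (L : E →L[ℂ] F) {g : ℂ → E}
    (hg : AnalyticAt ℂ g 0) (j : ℕ) :
    taylorCoeff j (fun z => L (g z)) = L (taylorCoeff j g) := by
  have h := L.iteratedFDeriv_comp_left (hg.contDiffAt (n := j)) le_rfl
  simp only [taylorCoeff, iteratedDeriv_eq_iteratedFDeriv, map_smul]
  congr 1
  exact congrArg (fun T => T fun _ => 1) h

theorem taylorCoeff_eq_of_isBigO_sub {g g' : ℂ → E} (hg : AnalyticAt ℂ g 0)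
    (hg' : AnalyticAt ℂ g' 0) {n : ℕ}
    (hO : (fun z => g z - g' z) =O[𝓝 0] fun μ : ℂ => μ ^ n) {j : ℕ} (hj : j < n) :
    taylorCoeff j g = taylorCoeff j g' := by
  have h := taylorCoeff_eq_zero_of_isBigO (hg.fun_sub hg') hO hj
  rwa [taylorCoeff, iteratedDeriv_fun_sub hg.contDiffAt hg'.contDiffAt, smul_sub, sub_eq_zero]
    at h

end TaylorCoefficients

section CauchyEstimates

variable {E F : Type*} [NormedAddCommGroup E] [NormedSpace ℂ E] [NormedAddCommGroup F]
  [NormedSpace ℂ F]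

theorem norm_fderiv_le_of_norm_le {φ : E → F} {z : E} {ρ M : ℝ} (hρ : 0 < ρ)
    (hd : ∀ w, ‖w - z‖ ≤ ρ → DifferentiableAt ℂ φ w)
    (hM : ∀ w, ‖w - z‖ ≤ ρ → ‖φ w‖ ≤ M) : ‖fderiv ℂ φ z‖ ≤ M / ρ := by
  have hz : ‖z - z‖ ≤ ρ := by simpa using hρ.le
  have hM0 : 0 ≤ M := (norm_nonneg _).trans (hM z hz)
  refine ContinuousLinearMap.opNorm_le_bound _ (by positivity) fun v => ?_
  obtain rfl | hv := eq_or_ne v 0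
  · simp
  have hv' : 0 < ‖v‖ := norm_pos_iff.2 hv
  have hmem : ∀ s : ℂ, ‖s‖ ≤ ρ / ‖v‖ → ‖z + s • v - z‖ ≤ ρ := fun s hs => by
    rwa [add_sub_cancel_left, norm_smul, ← le_div_iff₀ hv']
  have hline : ∀ s : ℂ, HasDerivAt (fun s : ℂ => z + s • v) v s := fun s => by
    simpa using ((hasDerivAt_id s).smul_const v).const_add z
  have hslice : DifferentiableOn ℂ (fun s : ℂ => φ (z + s • v))
      (closure (Metric.ball 0 (ρ / ‖v‖))) := fun s hs =>
    ((hd _ (hmem s (mem_closedBall_zero_iff.1 (Metric.closure_ball_subset_closedBall hs)))).comp s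
      (hline s).differentiableAt).differentiableWithinAt
  have hcauchy := Complex.norm_deriv_le_of_forall_mem_sphere_norm_le (by positivity)
    hslice.diffContOnCl fun s hs => hM _ (hmem s (mem_sphere_zero_iff_norm.1 hs).le)
  have hφ : HasFDerivAt φ (fderiv ℂ φ z) (z + (0 : ℂ) • v) := by
    simpa using (hd z hz).hasFDerivAt
  have hderiv : deriv (fun s : ℂ => φ (z + s • v)) 0 = fderiv ℂ φ z v :=
    (hφ.comp_hasDerivAt (0 : ℂ) (hline 0)).deriv
  rw [hderiv, div_div_eq_mul_div] at hcauchy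
  exact hcauchy.trans_eq (by ring)

theorem norm_sub_le_of_norm_le {φ : E → F} {y : E} {r ρ M : ℝ} (hρ : 0 < ρ)
    (hd : ∀ w, ‖w - y‖ ≤ r + ρ → DifferentiableAt ℂ φ w)
    (hM : ∀ w, ‖w - y‖ ≤ r + ρ → ‖φ w‖ ≤ M) {a b : E} (ha : ‖a - y‖ ≤ r) (hb : ‖b - y‖ ≤ r) :
    ‖φ b - φ a‖ ≤ M / ρ * ‖b - a‖ := by
  let _ : NormedSpace ℝ E := NormedSpace.restrictScalars ℝ ℂ E
  have hsub : ∀ z ∈ Metric.closedBall y r, ∀ w, ‖w - z‖ ≤ ρ → ‖w - y‖ ≤ r + ρ := by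
    intro z hz w hw
    rw [mem_closedBall_iff_norm] at hz
    linarith [norm_sub_le_norm_sub_add_norm_sub w z y]
  refine Convex.norm_image_sub_le_of_norm_fderiv_le (𝕜 := ℂ) (s := Metric.closedBall y r)
    (fun z hz => hd z (hsub z hz z (by simpa using hρ.le)))
    (fun z hz => norm_fderiv_le_of_norm_le hρ (fun w hw => hd w (hsub z hz w hw))
      fun w hw => hM w (hsub z hz w hw))
    (convex_closedBall y r) (mem_closedBall_iff_norm.2 ha) (mem_closedBall_iff_norm.2 hb)

end CauchyEstimates

section ParametricDerivatives

variable {E W : Type*} [NormedAddCommGroup E] [NormedSpace ℂ E] [NormedAddCommGroup W]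
  [NormedSpace ℂ W] {g : ℂ × E → W}

theorem hasDerivAt_slice_fst {p : ℂ × E} (hg : DifferentiableAt ℂ g p) :
    HasDerivAt (fun μ => g (μ, p.2)) (fderiv ℂ g p (1, 0)) p.1 :=
  hg.hasFDerivAt.comp_hasDerivAt (f := fun μ => (μ, p.2)) p.1
    ((hasDerivAt_id p.1).prodMk (hasDerivAt_const p.1 p.2))

theorem fderiv_slice_snd {p : ℂ × E} (hg : DifferentiableAt ℂ g p) (v : E) :
    fderiv ℂ (fun y => g (p.1, y)) p.2 v = fderiv ℂ g p (0, v) :=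
  congrArg (· v)
    (hg.hasFDerivAt.comp (f := fun y => (p.1, y)) p.2 (hasFDerivAt_prodMk_right p.1 p.2)).fderiv

variable [CompleteSpace W]

theorem analyticAt_fderiv_slice_snd {μ : ℂ} {x : E} (hg : AnalyticAt ℂ g (μ, x)) (v : E) :
    AnalyticAt ℂ (fun ν => fderiv ℂ (fun y => g (ν, y)) x v) μ := by
  have h : AnalyticAt ℂ (fun ν : ℂ => fderiv ℂ g (ν, x) (0, v)) μ :=
    ((ContinuousLinearMap.apply ℂ W ((0 : ℂ), v)).analyticAt _).comp
      (hg.fderiv.comp_of_eq (g := fderiv ℂ g) (analyticAt_id.prod analyticAt_const) rfl)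
  refine h.congr ?_
  filter_upwards [((Continuous.prodMk_left x).tendsto μ).eventually
    hg.eventually_analyticAt] with ν hν
  exact (fderiv_slice_snd hν.differentiableAt v).symm

theorem analyticAt_deriv_slice_fst {p : ℂ × E} (hg : AnalyticAt ℂ g p) :
    AnalyticAt ℂ (fun q : ℂ × E => deriv (fun μ => g (μ, q.2)) q.1) p := by
  have h : AnalyticAt ℂ (fun q => fderiv ℂ g q (1, 0)) p :=
    ((ContinuousLinearMap.apply ℂ W ((1 : ℂ), (0 : E))).analyticAt _).comp hg.fderiv
  refine h.congr ?_
  filter_upwards [hg.eventually_analyticAt] with q hq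
  exact (hasDerivAt_slice_fst hq.differentiableAt).deriv.symm

theorem fderiv_deriv_slice_comm {μ : ℂ} {x : E} (hg : AnalyticAt ℂ g (μ, x)) (v : E) :
    fderiv ℂ (fun y => deriv (fun ν => g (ν, y)) μ) x v =
      deriv (fun ν => fderiv ℂ (fun y => g (ν, y)) x v) μ := by
  have hD : HasFDerivAt (fderiv ℂ g) (fderiv ℂ (fderiv ℂ g) (μ, x)) (μ, x) :=
    hg.fderiv.differentiableAt.hasFDerivAt
  have hfst : (fun q : ℂ × E => deriv (fun ν => g (ν, q.2)) q.1) =ᶠ[𝓝 (μ, x)]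
      fun q => fderiv ℂ g q (1, 0) := by
    filter_upwards [hg.eventually_analyticAt] with q hq
    exact (hasDerivAt_slice_fst hq.differentiableAt).deriv
  have hsnd : (fun ν => fderiv ℂ (fun y => g (ν, y)) x v) =ᶠ[𝓝 μ]
      fun ν => fderiv ℂ g (ν, x) (0, v) := by
    filter_upwards [((Continuous.prodMk_left x).tendsto μ).eventually
      hg.eventually_analyticAt] with ν hν
    exact fderiv_slice_snd hν.differentiableAt v
  have hfst' : fderiv ℂ (fun y => deriv (fun ν => g (ν, y)) μ) x v =
      fderiv ℂ (fderiv ℂ g) (μ, x) (0, v) (1, 0) := by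
    rw [fderiv_slice_snd (analyticAt_deriv_slice_fst hg).differentiableAt, hfst.fderiv_eq]
    exact congrArg (· (0, v))
      ((ContinuousLinearMap.apply ℂ W ((1 : ℂ), (0 : E))).hasFDerivAt.comp _ hD).fderiv
  have hsnd' : deriv (fun ν => fderiv ℂ (fun y => g (ν, y)) x v) μ =
      fderiv ℂ (fderiv ℂ g) (μ, x) (1, 0) (0, v) := by
    rw [hsnd.deriv_eq]
    exact ((ContinuousLinearMap.apply ℂ W ((0 : ℂ), v)).hasFDerivAt.comp_hasDerivAt μ
      (hasDerivAt_slice_fst hg.fderiv.differentiableAt)).deriv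
  rw [hfst', hsnd']
  exact (hg.contDiffAt (n := 2)).isSymmSndFDerivAt (by simp) _ _

theorem analyticAt_iteratedDeriv_slice (j : ℕ) {μ : ℂ} {x : E} (hg : AnalyticAt ℂ g (μ, x)) :
    AnalyticAt ℂ (fun y => iteratedDeriv j (fun ν => g (ν, y)) μ) x := by
  induction j generalizing g with
  | zero =>
    simp only [iteratedDeriv_zero]
    exact hg.comp_of_eq (g := g) (analyticAt_const.prod analyticAt_id) rfl
  | succ j ih =>
    simp only [iteratedDeriv_succ']
    exact ih (analyticAt_deriv_slice_fst hg)

theorem fderiv_iteratedDeriv_slice (j : ℕ) {μ : ℂ} {x : E} (hg : AnalyticAt ℂ g (μ, x)) (v : E) :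
    fderiv ℂ (fun y => iteratedDeriv j (fun ν => g (ν, y)) μ) x v =
      iteratedDeriv j (fun ν => fderiv ℂ (fun y => g (ν, y)) x v) μ := by
  induction j generalizing g with
  | zero => simp only [iteratedDeriv_zero]
  | succ j ih =>
    simp only [iteratedDeriv_succ']
    refine (ih (analyticAt_deriv_slice_fst hg)).trans (EventuallyEq.iteratedDeriv_eq j ?_)
    filter_upwards [((Continuous.prodMk_left x).tendsto μ).eventually
      hg.eventually_analyticAt] with ν hν
    exact fderiv_deriv_slice_comm hν v

theorem analyticAt_taylorCoeff_slice (j : ℕ) {x : E} (hg : AnalyticAt ℂ g (0, x)) :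
    AnalyticAt ℂ (fun y => taylorCoeff j fun μ => g (μ, y)) x :=
  analyticAt_const.smul (analyticAt_iteratedDeriv_slice j hg)

theorem fderiv_taylorCoeff_slice (j : ℕ) {x : E} (hg : AnalyticAt ℂ g (0, x)) (v : E) :
    fderiv ℂ (fun y => taylorCoeff j fun μ => g (μ, y)) x v =
      taylorCoeff j fun μ => fderiv ℂ (fun y => g (μ, y)) x v := by
  simp only [taylorCoeff]
  rw [fderiv_fun_const_smul (analyticAt_iteratedDeriv_slice j hg).differentiableAt,
    ← fderiv_iteratedDeriv_slice j hg]
  rfl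

end ParametricDerivatives

section BinomialPolynomials

open Polynomial

/-- The binomial coefficient `X choose k` as a polynomial in `X`. -/
noncomputable def binomPoly (k : ℕ) : ℂ[X] :=
  C (k.factorial : ℂ)⁻¹ * descPochhammer ℂ k

theorem binomPoly_zero : binomPoly 0 = 1 := by
  simp [binomPoly]

theorem binomPoly_succ (k : ℕ) :
    binomPoly (k + 1) = binomPoly k * (C ((k : ℂ) + 1)⁻¹ * (X - C (k : ℂ))) := by
  rw [binomPoly, binomPoly, descPochhammer_succ_right, Nat.factorial_succ, Nat.cast_mul,
    mul_inv, C_mul, Nat.cast_succ, C_eq_natCast k]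
  ring

theorem natDegree_binomPoly_le (k : ℕ) : (binomPoly k).natDegree ≤ k :=
  (natDegree_C_mul_le _ _).trans (descPochhammer_natDegree ℂ k).le

theorem eval_binomPoly_natCast (n k : ℕ) : (binomPoly k).eval (n : ℂ) = n.choose k := by
  rw [binomPoly, eval_mul, eval_C, descPochhammer_eval_eq_descFactorial,
    Nat.descFactorial_eq_factorial_mul_choose, Nat.cast_mul,
    inv_mul_cancel_left₀ (Nat.cast_ne_zero.2 k.factorial_ne_zero)]

theorem eval_binomPoly_succ (k : ℕ) (t : ℂ) :
    (binomPoly (k + 1)).eval t = (binomPoly k).eval t * ((t - k) / (k + 1)) := by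
  rw [binomPoly_succ, eval_mul, eval_mul, eval_C, eval_sub, eval_X, eval_C, div_eq_inv_mul]

theorem eval_derivative_binomPoly_succ (k : ℕ) (t : ℂ) :
    (binomPoly (k + 1)).derivative.eval t =
      (binomPoly k).derivative.eval t * ((t - k) / (k + 1)) +
        (binomPoly k).eval t / (k + 1) := by
  rw [binomPoly_succ, derivative_mul, derivative_C_mul, derivative_X_sub_C]
  simp only [eval_add, eval_mul, eval_C, eval_sub, eval_X, mul_one, div_eq_mul_inv]
  ring

theorem eval_binomPoly_zero (k : ℕ) : (binomPoly k).eval 0 = if k = 0 then 1 else 0 := by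
  have h := eval_binomPoly_natCast 0 k
  rw [Nat.cast_zero] at h
  rcases k with _ | k <;> simp [h]

theorem eval_derivative_binomPoly_zero (k : ℕ) :
    (binomPoly k).derivative.eval 0 = (-1) ^ (k - 1) / k := by
  rcases k with _ | k
  · simp [binomPoly_zero]
  induction k with
  | zero => simp [eval_derivative_binomPoly_succ, binomPoly_zero]
  | succ k ih =>
    have hk : ((k + 1 : ℕ) : ℂ) ≠ 0 := Nat.cast_ne_zero.2 k.succ_ne_zero
    rw [eval_derivative_binomPoly_succ, ih, eval_binomPoly_zero, if_neg k.succ_ne_zero,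
      Nat.add_sub_cancel, Nat.add_sub_cancel, Nat.cast_succ (k + 1)]
    field

theorem norm_sub_natCast_of_le_one {t : ℝ} (ht : t ≤ 1) (k : ℕ) :
    ‖(t : ℂ) - ((k + 1 : ℕ) : ℂ)‖ = k + 1 - t := by
  rw [← Complex.ofReal_natCast, ← Complex.ofReal_sub, Complex.norm_real, Real.norm_of_nonpos]
  · push_cast; ring
  · push_cast; linarith [k.cast_nonneg (α := ℝ)]

theorem norm_eval_binomPoly_succ_le (k : ℕ) {t : ℝ} (ht : t ∈ Set.Icc (0 : ℝ) 1) :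
    ‖(binomPoly (k + 1)).eval (t : ℂ)‖ ≤ t / (k + 1) := by
  induction k with
  | zero => simp [eval_binomPoly_succ, binomPoly_zero, abs_of_nonneg ht.1]
  | succ k ih =>
    rw [eval_binomPoly_succ, ← Nat.cast_succ (R := ℂ), norm_mul, norm_div,
      norm_sub_natCast_of_le_one ht.2, Complex.norm_natCast, ← Nat.cast_succ (k + 1)]
    calc _ ≤ t / (k + 1) * ((k + 1 - t) / (k + 1 + 1 : ℕ)) := by
          have : 0 ≤ (k : ℝ) + 1 - t := by linarith [ht.2, k.cast_nonneg (α := ℝ)]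
          gcongr
      _ ≤ t / (k + 1) * ((k + 1) / (k + 1 + 1 : ℕ)) := by
          have := ht.1
          gcongr
          linarith
      _ = t / (k + 1 + 1 : ℕ) := by field

theorem norm_eval_derivative_binomPoly_succ_le (k : ℕ) {t : ℝ} (ht : t ∈ Set.Icc (0 : ℝ) 1) :
    ‖(binomPoly (k + 1)).derivative.eval (t : ℂ)‖ ≤ 1 / (k + 1) := by
  induction k with
  | zero => simp [eval_derivative_binomPoly_succ, binomPoly_zero]
  | succ k ih =>
    rw [eval_derivative_binomPoly_succ, ← Nat.cast_succ (R := ℂ), ← Nat.cast_succ (k + 1)]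
    refine (norm_add_le _ _).trans ?_
    rw [norm_mul, norm_div, norm_div, norm_sub_natCast_of_le_one ht.2, Complex.norm_natCast]
    have : 0 ≤ (k : ℝ) + 1 - t := by linarith [ht.2, k.cast_nonneg (α := ℝ)]
    calc _ ≤ 1 / ((k : ℝ) + 1) * ((k + 1 - t) / (k + 1 + 1 : ℕ)) +
          t / (k + 1) / (k + 1 + 1 : ℕ) := by
          gcongr
          exact norm_eval_binomPoly_succ_le k ht
      _ = 1 / (k + 1 + 1 : ℕ) := by push_cast; field

end BinomialPolynomials

section PolynomialCurves

open Polynomial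

variable {E F G W : Type*} [NormedAddCommGroup E] [NormedSpace ℂ E] [NormedAddCommGroup F]
  [NormedSpace ℂ F] [NormedAddCommGroup G] [NormedSpace ℂ G] [NormedAddCommGroup W]
  [NormedSpace ℂ W]

/-- The space of polynomial curves `ℂ → W` of degree at most `N`. -/
def polyCurve (W : Type*) [NormedAddCommGroup W] [NormedSpace ℂ W] (N : ℕ) :
    Submodule ℂ (ℂ → W) :=
  Submodule.span ℂ {u | ∃ P : ℂ[X], P.natDegree ≤ N ∧ ∃ w : W, u = fun t => P.eval t • w}

/-- The Lagrange basis polynomials at the nodes `0, …, N`. -/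
noncomputable def natLagrange (N n : ℕ) : ℂ[X] :=
  Lagrange.basis (Finset.range (N + 1)) (fun k : ℕ => (k : ℂ)) n

theorem eval_smul_mem_polyCurve {P : ℂ[X]} {N : ℕ} (hP : P.natDegree ≤ N) (w : W) :
    (fun t => P.eval t • w) ∈ polyCurve W N :=
  Submodule.subset_span ⟨P, hP, w, rfl⟩

theorem polyCurve_mono {N M : ℕ} (h : N ≤ M) : polyCurve W N ≤ polyCurve W M :=
  Submodule.span_mono fun _ ⟨P, hP, w, hu⟩ => ⟨P, hP.trans h, w, hu⟩

theorem const_mem_polyCurve (N : ℕ) (w : W) : (fun _ => w) ∈ polyCurve W N := by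
  simpa using eval_smul_mem_polyCurve (P := 1) (N := N) (by simp) w

theorem natDegree_natLagrange_le {N n : ℕ} (hn : n ∈ Finset.range (N + 1)) :
    (natLagrange N n).natDegree ≤ N := by
  rw [natLagrange, Lagrange.natDegree_basis (Nat.cast_injective.injOn) hn, Finset.card_range,
    Nat.add_sub_cancel]

theorem polyCurve_eq_sum {N : ℕ} {u : ℂ → W} (hu : u ∈ polyCurve W N) :
    u = fun t => ∑ n ∈ Finset.range (N + 1), (natLagrange N n).eval t • u n := by
  induction hu using Submodule.span_induction with
  | mem u h =>
    obtain ⟨P, hP, w, rfl⟩ := h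
    have hdeg : P.degree < (Finset.range (N + 1)).card := by
      rw [Finset.card_range]
      exact degree_le_natDegree.trans_lt (by exact_mod_cast Nat.lt_succ_of_le hP)
    funext t
    conv_lhs => rw [Lagrange.eq_interpolate (v := fun n : ℕ => (n : ℂ))
      Nat.cast_injective.injOn hdeg]
    simp only [Lagrange.interpolate_apply, eval_finsetSum, eval_mul, eval_C, Finset.sum_smul,
      smul_smul, natLagrange, mul_comm]
  | zero => simp [Pi.zero_def]
  | add u v _ _ hu hv =>
    funext t
    simp only [Pi.add_apply, smul_add, Finset.sum_add_distrib]
    exact congrArg₂ (· + ·) (congrFun hu t) (congrFun hv t)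
  | smul c u _ hu =>
    funext t
    simp only [Pi.smul_apply, smul_comm _ c, ← Finset.smul_sum]
    exact congrArg (c • ·) (congrFun hu t)

theorem hasDerivAt_of_mem_polyCurve {N : ℕ} {u : ℂ → W} (hu : u ∈ polyCurve W N) (t : ℂ) :
    HasDerivAt u (∑ n ∈ Finset.range (N + 1), (natLagrange N n).derivative.eval t • u n) t := by
  have h : HasDerivAt (fun t => ∑ n ∈ Finset.range (N + 1), (natLagrange N n).eval t • u n)
      (∑ n ∈ Finset.range (N + 1), (natLagrange N n).derivative.eval t • u n) t :=
    HasDerivAt.fun_sum fun n _ => ((natLagrange N n).hasDerivAt t).smul_const (u n)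
  rwa [← polyCurve_eq_sum hu] at h

theorem isBigO_of_forall_natCast {l : Filter ℂ} {φ : ℂ → ℂ} {N : ℕ} {U : ℂ → ℂ → W}
    (hU : ∀ μ, U μ ∈ polyCurve W N) (h : ∀ n : ℕ, (fun μ => U μ n) =O[l] φ) (t : ℂ) :
    (fun μ => U μ t) =O[l] φ := by
  simp only [fun μ => congrFun (polyCurve_eq_sum (hU μ)) t]
  exact IsBigO.fun_sum fun n _ => (h n).const_smul_left _

theorem isBigO_deriv_of_forall_natCast {l : Filter ℂ} {φ : ℂ → ℂ} {N : ℕ} {U : ℂ → ℂ → W}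
    (hU : ∀ μ, U μ ∈ polyCurve W N) (h : ∀ n : ℕ, (fun μ => U μ n) =O[l] φ) (t : ℂ) :
    (fun μ => deriv (U μ) t) =O[l] φ := by
  simp only [fun μ => (hasDerivAt_of_mem_polyCurve (hU μ) t).deriv]
  exact IsBigO.fun_sum fun n _ => (h n).const_smul_left _

theorem deriv_mem_polyCurve {N : ℕ} {u : ℂ → W} (hu : u ∈ polyCurve W N) :
    deriv u ∈ polyCurve W N := by
  have h : deriv u =
      ∑ n ∈ Finset.range (N + 1), fun t => (natLagrange N n).derivative.eval t • u n := by
    funext t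
    rw [(hasDerivAt_of_mem_polyCurve hu t).deriv, Finset.sum_apply]
  rw [h]
  exact Submodule.sum_mem _ fun n hn => eval_smul_mem_polyCurve
    ((natDegree_derivative_le _).trans ((Nat.sub_le _ _).trans (natDegree_natLagrange_le hn))) _

theorem multilinear_comp_mem_polyCurve {N k : ℕ} (p : E [×k]→L[ℂ] W) {u : ℂ → E}
    (hu : u ∈ polyCurve E N) : (fun t => p fun _ => u t) ∈ polyCurve W (k * N) := by
  have h : (fun t => p fun _ => u t) =
      ∑ r ∈ Fintype.piFinset fun _ : Fin k => Finset.range (N + 1),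
        fun t => (∏ i, natLagrange N (r i)).eval t • p fun i => u (r i) := by
    funext t
    conv_lhs => rw [polyCurve_eq_sum hu]
    rw [Finset.sum_apply, p.map_sum_finset]
    refine Finset.sum_congr rfl fun r _ => ?_
    rw [p.map_smul_univ, eval_prod]
  rw [h]
  refine Submodule.sum_mem _ fun r hr => eval_smul_mem_polyCurve ?_ _
  refine (natDegree_prod_le _ _).trans ((Finset.sum_le_card_nsmul _ _ N fun i _ =>
    natDegree_natLagrange_le (Fintype.mem_piFinset.1 hr i)).trans_eq ?_)
  rw [Finset.card_univ, Fintype.card_fin, smul_eq_mul]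

theorem bilinear_comp_mem_polyCurve {N M : ℕ} (θ : E →L[ℂ] F →L[ℂ] G) {u : ℂ → E} {v : ℂ → F}
    (hu : u ∈ polyCurve E N) (hv : v ∈ polyCurve F M) :
    (fun t => θ (u t) (v t)) ∈ polyCurve G (N + M) := by
  have h : (fun t => θ (u t) (v t)) =
      ∑ i ∈ Finset.range (N + 1), ∑ j ∈ Finset.range (M + 1),
        fun t => (natLagrange M j * natLagrange N i).eval t • θ (u i) (v j) := by
    funext t
    conv_lhs => rw [polyCurve_eq_sum hu, polyCurve_eq_sum hv]
    simp only [map_sum, map_smul, FunLike.coe_sum, FunLike.coe_smul, Finset.sum_apply,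
      Pi.smul_apply, smul_smul, eval_mul, Finset.smul_sum]
    exact Finset.sum_comm
  rw [h]
  refine Submodule.sum_mem _ fun i hi => Submodule.sum_mem _ fun j hj =>
    eval_smul_mem_polyCurve (natDegree_mul_le.trans ?_) _
  rw [add_comm N M]
  exact add_le_add (natDegree_natLagrange_le hj) (natDegree_natLagrange_le hi)

end PolynomialCurves

section PolynomialCurveComposition

open Polynomial

variable {E W : Type*} [NormedAddCommGroup E] [NormedSpace ℂ E] [NormedAddCommGroup W]
  [NormedSpace ℂ W]

theorem clm_comp_mem_polyCurve (L : E →L[ℂ] W) {N : ℕ} {u : ℂ → E} (hu : u ∈ polyCurve E N) :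
    (fun t => L (u t)) ∈ polyCurve W N := by
  have h : (fun t => L (u t)) =
      ∑ n ∈ Finset.range (N + 1), fun t => (natLagrange N n).eval t • L (u n) := by
    funext t
    conv_lhs => rw [polyCurve_eq_sum hu]
    rw [Finset.sum_apply, map_sum]
    exact Finset.sum_congr rfl fun n _ => map_smul L _ _
  rw [h]
  exact Submodule.sum_mem _ fun n hn => eval_smul_mem_polyCurve (natDegree_natLagrange_le hn) _

theorem comp_add_const_mem_polyCurve {N : ℕ} {u : ℂ → W} (hu : u ∈ polyCurve W N) (c : ℂ) :
    (fun t => u (t + c)) ∈ polyCurve W N := by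
  have h : (fun t => u (t + c)) = ∑ n ∈ Finset.range (N + 1),
      fun t => ((natLagrange N n).comp (X + C c)).eval t • u n := by
    funext t
    rw [Finset.sum_apply, congrFun (polyCurve_eq_sum hu) (t + c)]
    simp only [eval_comp, eval_add, eval_X, eval_C]
  rw [h]
  refine Submodule.sum_mem _ fun n hn => eval_smul_mem_polyCurve ?_ _
  rw [natDegree_comp, natDegree_X_add_C, mul_one]
  exact natDegree_natLagrange_le hn

/- Modulo `μ ^ k` the analytic map `Q` is its Taylor polynomial, so `Q ∘ U μ` is a polynomial
curve up to the error that is being estimated. -/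
theorem isBigO_sub_analyticAt_comp_of_forall_natCast {Q : E → W} {z : E} (hQ : AnalyticAt ℂ Q z)
    {N k : ℕ} {U : ℂ → ℂ → E} (hU : ∀ μ, U μ ∈ polyCurve E N)
    (hUz : ∀ t, (fun μ => U μ t - z) =O[𝓝 0] fun μ : ℂ => μ)
    {V : ℂ → ℂ → W} (hV : ∀ μ, V μ ∈ polyCurve W N)
    (h : ∀ n : ℕ, (fun μ => V μ n - Q (U μ n)) =O[𝓝 0] fun μ : ℂ => μ ^ k) (t : ℂ) :
    (fun μ => V μ t - Q (U μ t)) =O[𝓝 0] fun μ : ℂ => μ ^ k := by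
  obtain ⟨p, hp⟩ := hQ
  have hrem : ∀ t, (fun μ => Q (U μ t) - p.partialSum k (U μ t - z)) =O[𝓝 0]
      fun μ : ℂ => μ ^ k := by
    intro t
    have hlim : Tendsto (fun μ => U μ t - z) (𝓝 0) (𝓝 0) := (hUz t).trans_tendsto tendsto_id
    have hO := ((hp.isBigO_sub_partialSum_pow k).comp_tendsto hlim).trans
      ((hUz t).norm_left.pow k)
    exact hO.congr_left fun μ => by simp only [Function.comp_apply, add_sub_cancel]
  have hpoly : ∀ μ, (fun t => V μ t - p.partialSum k (U μ t - z)) ∈ polyCurve W (N + k * N) := by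
    intro μ
    have hsub : (fun t => U μ t - z) ∈ polyCurve E N :=
      Submodule.sub_mem _ (hU μ) (const_mem_polyCurve N z)
    have hsum : (fun t => p.partialSum k (U μ t - z)) =
        ∑ i ∈ Finset.range k, fun t => p i fun _ => U μ t - z := by
      funext t
      rw [FormalMultilinearSeries.partialSum, Finset.sum_apply]
    refine Submodule.sub_mem _ (polyCurve_mono (Nat.le_add_right _ _) (hV μ)) ?_
    rw [hsum]
    refine Submodule.sum_mem _ fun i hi => polyCurve_mono ?_
      (multilinear_comp_mem_polyCurve (p i) hsub)
    exact (Nat.mul_le_mul_right N (Finset.mem_range.1 hi).le).trans (Nat.le_add_left _ _)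
  have hnat : ∀ n : ℕ, (fun μ => V μ n - p.partialSum k (U μ n - z)) =O[𝓝 0]
      fun μ : ℂ => μ ^ k := fun n =>
    ((h n).add (hrem n)).congr_left fun μ => sub_add_sub_cancel _ _ _
  exact ((isBigO_of_forall_natCast hpoly hnat t).sub (hrem t)).congr_left fun μ =>
    sub_sub_sub_cancel_right _ _ _

end PolynomialCurveComposition

section NewtonCurves

variable {E F G W : Type*} [NormedAddCommGroup E] [NormedSpace ℂ E] [NormedAddCommGroup F]
  [NormedSpace ℂ F] [NormedAddCommGroup G] [NormedSpace ℂ G] [NormedAddCommGroup W]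
  [NormedSpace ℂ W]

/-- The Newton polynomial of degree `m` interpolating the sequence `b` at the nodes `0, …, m`. -/
noncomputable def newtonCurve (m : ℕ) (b : ℕ → W) (t : ℂ) : W :=
  ∑ k ∈ Finset.range (m + 1), (binomPoly k).eval t • (fwdDiff 1)^[k] b 0

/-- The logarithm `log (1 + Δ) = ∑ (-1) ^ (k - 1) / k • Δ ^ k` of the shift operator, truncated
at order `m` and evaluated on the sequence `b` at the index `0`. -/
noncomputable def truncLog (m : ℕ) (b : ℕ → W) : W :=
  ∑ k ∈ Finset.Icc 1 m, ((-1 : ℂ) ^ (k - 1) / k) • (fwdDiff 1)^[k] b 0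

/-- A family of sequences depending on a small parameter `μ`, whose `k`-th differences at the
index `0` are of order `μ ^ k`. -/
def HasSmallDifferences (b : ℂ → ℕ → W) : Prop :=
  ∀ k, (fun μ => (fwdDiff 1)^[k] (b μ) 0) =O[𝓝 0] fun μ : ℂ => μ ^ k

theorem HasSmallDifferences.truncLog_sub_isBigO {b : ℂ → ℕ → W} (hb : HasSmallDifferences b)
    {j m : ℕ} (hjm : j ≤ m) :
    (fun μ => truncLog m (b μ) - truncLog j (b μ)) =O[𝓝 0] fun μ : ℂ => μ ^ (j + 1) := by
  simp only [truncLog, ← Finset.sum_sdiff_eq_sub (Finset.Icc_subset_Icc_right hjm)]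
  refine IsBigO.fun_sum fun k hk => ((hb k).const_smul_left _).trans (isBigO_pow_of_le ?_)
  simp only [Finset.mem_sdiff, Finset.mem_Icc] at hk
  lia

theorem newtonCurve_mem_polyCurve (m : ℕ) (b : ℕ → W) : newtonCurve m b ∈ polyCurve W m := by
  have h : newtonCurve m b =
      ∑ k ∈ Finset.range (m + 1), fun t => (binomPoly k).eval t • (fwdDiff 1)^[k] b 0 := by
    funext t
    rw [newtonCurve, Finset.sum_apply]
  rw [h]
  exact Submodule.sum_mem _ fun k hk => eval_smul_mem_polyCurve
    ((natDegree_binomPoly_le k).trans (Nat.lt_succ_iff.1 (Finset.mem_range.1 hk))) _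

theorem newtonCurve_natCast {n m : ℕ} (hn : n ≤ m) (b : ℕ → W) : newtonCurve m b n = b n := by
  have hb := shift_eq_sum_fwdDiff_iter 1 b n 0
  rw [zero_add, smul_eq_mul, mul_one] at hb
  rw [hb, newtonCurve, ← Finset.sum_subset (Finset.range_mono (Nat.succ_le_succ hn))]
  · exact Finset.sum_congr rfl fun k _ => by rw [eval_binomPoly_natCast, Nat.cast_smul_eq_nsmul]
  · intro k _ hk
    rw [eval_binomPoly_natCast, Nat.choose_eq_zero_of_lt (by simpa using hk), Nat.cast_zero,
      zero_smul]

theorem newtonCurve_zero (m : ℕ) (b : ℕ → W) : newtonCurve m b 0 = b 0 := by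
  simpa using newtonCurve_natCast m.zero_le b

theorem hasDerivAt_newtonCurve (m : ℕ) (b : ℕ → W) (t : ℂ) :
    HasDerivAt (newtonCurve m b)
      (∑ k ∈ Finset.range (m + 1), (binomPoly k).derivative.eval t • (fwdDiff 1)^[k] b 0) t :=
  HasDerivAt.fun_sum fun k _ => ((binomPoly k).hasDerivAt t).smul_const _

theorem hasDerivAt_newtonCurve_zero (m : ℕ) (b : ℕ → W) :
    HasDerivAt (newtonCurve m b) (truncLog m b) 0 := by
  have hrange : Finset.range (m + 1) = insert 0 (Finset.Icc 1 m) := by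
    ext k
    simp only [Finset.mem_range, Finset.mem_insert, Finset.mem_Icc]
    lia
  refine (hasDerivAt_newtonCurve m b 0).congr_deriv ?_
  rw [hrange, Finset.sum_insert (by simp), truncLog]
  simp only [eval_derivative_binomPoly_zero, Nat.cast_zero, div_zero, zero_smul, zero_add]

namespace HasSmallDifferences

variable {b : ℂ → ℕ → W}

theorem isBigO_fwdDiff (hb : HasSmallDifferences b) (k n : ℕ) :
    (fun μ => (fwdDiff 1)^[k] (b μ) n) =O[𝓝 0] fun μ : ℂ => μ ^ k := by
  have h : ∀ μ, (fwdDiff 1)^[k] (b μ) n =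
      ∑ i ∈ Finset.range (n + 1), (n.choose i : ℂ) • (fwdDiff 1)^[i + k] (b μ) 0 := fun μ => by
    have hnewton := shift_eq_sum_fwdDiff_iter 1 ((fwdDiff 1)^[k] (b μ)) n 0
    simpa only [zero_add, smul_eq_mul, mul_one, ← Function.iterate_add_apply,
      Nat.cast_smul_eq_nsmul] using hnewton
  simp only [h]
  exact IsBigO.fun_sum fun i _ =>
    ((hb (i + k)).trans (isBigO_pow_of_le (Nat.le_add_left k i))).const_smul_left _

theorem shift (hb : HasSmallDifferences b) (n : ℕ) :
    HasSmallDifferences fun μ j => b μ (j + n) := fun k => by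
  simpa only [fwdDiff_iter_comp_add, zero_add] using hb.isBigO_fwdDiff k n

theorem isBigO_one (hb : HasSmallDifferences b) (n : ℕ) :
    (fun μ => b μ n) =O[𝓝 0] fun _ : ℂ => (1 : ℂ) := by
  simpa using hb.isBigO_fwdDiff 0 n

theorem newtonCurve_natCast_sub (hb : HasSmallDifferences b) (m n : ℕ) :
    (fun μ => newtonCurve m (b μ) n - b μ n) =O[𝓝 0] fun μ : ℂ => μ ^ (m + 1) := by
  have hterm : ∀ k, (fun μ => (n.choose k : ℂ) • (fwdDiff 1)^[k] (b μ) 0) =O[𝓝 0]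
      fun μ : ℂ => μ ^ k := fun k => (hb k).const_smul_left _
  have hexact : ∀ μ, b μ n =
      ∑ k ∈ Finset.range (n + 1 + m), (n.choose k : ℂ) • (fwdDiff 1)^[k] (b μ) 0 := fun μ => by
    have hnewton := shift_eq_sum_fwdDiff_iter 1 (b μ) n 0
    simp only [zero_add, smul_eq_mul, mul_one, ← Nat.cast_smul_eq_nsmul ℂ] at hnewton
    rw [hnewton]
    refine Finset.sum_subset (Finset.range_mono (Nat.le_add_right _ m)) fun k _ hk => ?_
    rw [Nat.choose_eq_zero_of_lt (by simpa using hk), Nat.cast_zero, zero_smul]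
  have htail : ∀ μ, newtonCurve m (b μ) n - b μ n =
      -∑ k ∈ Finset.range n, (n.choose (m + 1 + k) : ℂ) • (fwdDiff 1)^[m + 1 + k] (b μ) 0 :=
      fun μ => by
    rw [hexact, show n + 1 + m = m + 1 + n by ring, Finset.sum_range_add, newtonCurve]
    simp only [eval_binomPoly_natCast, sub_add_cancel_left]
  simp only [htail]
  exact (IsBigO.fun_sum fun k _ => (hterm (m + 1 + k)).trans
    (isBigO_pow_of_le (Nat.le_add_right _ _))).neg_left

theorem deriv_newtonCurve_natCast_sub_truncLog (hb : HasSmallDifferences b) (m n : ℕ) :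
    (fun μ => deriv (newtonCurve m (b μ)) n - truncLog m fun j => b μ (j + n)) =O[𝓝 0]
      fun μ : ℂ => μ ^ (m + 1) := by
  have hpoly : ∀ μ, (fun t => newtonCurve m (b μ) (t + n) - newtonCurve m (fun j => b μ (j + n)) t)
      ∈ polyCurve W m := fun μ =>
    Submodule.sub_mem _ (comp_add_const_mem_polyCurve (newtonCurve_mem_polyCurve m _) _)
      (newtonCurve_mem_polyCurve m _)
  have hnat : ∀ j : ℕ, (fun μ => newtonCurve m (b μ) (j + n) -
      newtonCurve m (fun j => b μ (j + n)) j) =O[𝓝 0] fun μ : ℂ => μ ^ (m + 1) := fun j => by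
    have h := (hb.newtonCurve_natCast_sub m (j + n)).sub ((hb.shift n).newtonCurve_natCast_sub m j)
    simpa only [Nat.cast_add, sub_sub_sub_cancel_right] using h
  refine (isBigO_deriv_of_forall_natCast hpoly hnat 0).congr_left fun μ => ?_
  refine HasDerivAt.deriv (HasDerivAt.fun_sub ?_ (hasDerivAt_newtonCurve_zero m _))
  refine HasDerivAt.comp_add_const 0 (n : ℂ) ?_
  rw [zero_add]
  exact (hasDerivAt_newtonCurve m _ n).differentiableAt.hasDerivAt

theorem newtonCurve_sub (hb : HasSmallDifferences b) (m : ℕ) (t : ℂ) :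
    (fun μ => newtonCurve m (b μ) t - b μ 0) =O[𝓝 0] fun μ : ℂ => μ := by
  simp only [newtonCurve, Finset.sum_range_succ', binomPoly_zero, Polynomial.eval_one, one_smul,
    Function.iterate_zero, id_eq, add_sub_cancel_right]
  refine IsBigO.fun_sum fun k _ => ((hb (k + 1)).trans ?_).const_smul_left _
  simpa using isBigO_pow_of_le (Nat.succ_le_succ k.zero_le)

/- Near the orbit the truncated logarithm is the velocity of the Newton curve at all integer times,
and up to `O(μ ^ (m + 1))` everything is polynomial in time. -/
theorem deriv_newtonCurve_sub_isBigO (hb : HasSmallDifferences b) {x : W} (hx : ∀ μ, b μ 0 = x)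
    (m : ℕ) {Q : ℂ × W → W} (hQ : AnalyticAt ℂ Q (0, x))
    (hbQ : ∀ n, ∀ᶠ μ in 𝓝 (0 : ℂ), truncLog m (fun j => b μ (j + n)) = Q (μ, b μ n)) (t : ℂ) :
    (fun μ => deriv (newtonCurve m (b μ)) t - Q (μ, newtonCurve m (b μ) t)) =O[𝓝 0]
      fun μ : ℂ => μ ^ (m + 1) := by
  have hcurve : ∀ t, (fun μ : ℂ => (μ, newtonCurve m (b μ) t) - ((0 : ℂ), x)) =O[𝓝 0]
      fun μ : ℂ => μ := fun t => by
    simpa only [Prod.mk_sub_mk, sub_zero, hx] using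
      (isBigO_refl (fun μ : ℂ => μ) _).prod_left (hb.newtonCurve_sub m t)
  have hsub : ∀ n : ℕ, (fun μ => b μ n - x) =O[𝓝 0] fun μ : ℂ => μ := fun n => by
    refine (((hb.newtonCurve_sub m n).sub ((hb.newtonCurve_natCast_sub m n).trans ?_))).congr_left
      fun μ => ?_
    · simpa using isBigO_pow_of_le (Nat.succ_le_succ m.zero_le)
    · rw [hx, sub_sub_sub_cancel_left]
  refine isBigO_sub_analyticAt_comp_of_forall_natCast (N := m) hQ
    (U := fun μ t => (μ, newtonCurve m (b μ) t)) (fun μ => ?_) hcurve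
    (V := fun μ => deriv (newtonCurve m (b μ)))
    (fun μ => deriv_mem_polyCurve (newtonCurve_mem_polyCurve m _)) (fun n => ?_) t
  · have h := Submodule.add_mem _ (const_mem_polyCurve m ((μ : ℂ), (0 : W)))
      (clm_comp_mem_polyCurve (ContinuousLinearMap.inr ℂ ℂ W) (newtonCurve_mem_polyCurve m (b μ)))
    simpa [Pi.add_def] using h
  · have hlim : Tendsto (fun μ => ((μ, b μ n), (μ, newtonCurve m (b μ) n))) (𝓝 0)
        (𝓝 (((0 : ℂ), x), ((0 : ℂ), x))) := by
      refine (Tendsto.prodMk_nhds tendsto_id ?_).prodMk_nhds ?_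
      · exact tendsto_sub_nhds_zero_iff.1 ((hsub n).trans_tendsto tendsto_id)
      · exact tendsto_sub_nhds_zero_iff.1 ((hcurve n).trans_tendsto tendsto_id)
    have hlip := (hQ.hasStrictFDerivAt.isBigO_sub.comp_tendsto hlim).trans
      (((isBigO_zero _ _).prod_left (hb.newtonCurve_natCast_sub m n).neg_left).congr_left
        fun μ => by simp)
    refine ((hb.deriv_newtonCurve_natCast_sub_truncLog m n).add hlip).congr' ?_ .rfl
    filter_upwards [hbQ n] with μ hμ
    simp [hμ]

end HasSmallDifferences

theorem isBigO_bilinear (θ : E →L[ℂ] F →L[ℂ] G) {u : ℂ → E} {v : ℂ → F} {φ ψ : ℂ → ℂ}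
    (hu : u =O[𝓝 0] φ) (hv : v =O[𝓝 0] ψ) :
    (fun μ => θ (u μ) (v μ)) =O[𝓝 0] fun μ => φ μ * ψ μ :=
  θ.isBoundedBilinearMap.isBigO_comp.trans (hu.norm_left.mul hv.norm_left)

theorem truncLog_leibniz (θ : E →L[ℂ] F →L[ℂ] G) {p : ℂ → ℕ → E} {w : ℂ → ℕ → F} {B : ℂ → ℕ → G}
    (hp : HasSmallDifferences p) (hw : HasSmallDifferences w) (hB : HasSmallDifferences B)
    (h : ∀ n, ∀ᶠ μ in 𝓝 (0 : ℂ), θ (p μ n) (w μ n) - θ (p μ 0) (w μ 0) = B μ n) (m : ℕ) :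
    (fun μ => θ (truncLog m (p μ)) (w μ 0) + θ (p μ 0) (truncLog m (w μ)) - truncLog m (B μ))
      =O[𝓝 0] fun μ : ℂ => μ ^ (m + 1) := by
  have hpoly : ∀ μ, (fun t => θ (newtonCurve m (p μ) t) (newtonCurve m (w μ) t) -
      newtonCurve m (B μ) t - θ (p μ 0) (w μ 0)) ∈ polyCurve G (m + m) := fun μ =>
    Submodule.sub_mem _ (Submodule.sub_mem _
      (bilinear_comp_mem_polyCurve θ (newtonCurve_mem_polyCurve m _)
        (newtonCurve_mem_polyCurve m _))
      (polyCurve_mono (Nat.le_add_left _ _) (newtonCurve_mem_polyCurve m _)))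
      (const_mem_polyCurve _ _)
  have hnat : ∀ n : ℕ, (fun μ => θ (newtonCurve m (p μ) n) (newtonCurve m (w μ) n) -
      newtonCurve m (B μ) n - θ (p μ 0) (w μ 0)) =O[𝓝 0] fun μ : ℂ => μ ^ (m + 1) := fun n => by
    have hwn : (fun μ => newtonCurve m (w μ) n) =O[𝓝 0] fun _ : ℂ => (1 : ℂ) := by
      refine (((hw.newtonCurve_natCast_sub m n).trans ?_).add (hw.isBigO_one n)).congr_left
        fun μ => sub_add_cancel _ _
      simpa using isBigO_pow_of_le (m + 1).zero_le
    have hfst := isBigO_bilinear θ (hp.newtonCurve_natCast_sub m n) hwn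
    have hsnd := isBigO_bilinear θ (hp.isBigO_one n) (hw.newtonCurve_natCast_sub m n)
    simp only [mul_one, one_mul] at hfst hsnd
    refine ((hfst.add hsnd).sub (hB.newtonCurve_natCast_sub m n)).congr' ?_ .rfl
    filter_upwards [h n] with μ hμ
    rw [← hμ]
    simp only [map_sub, sub_apply]
    abel
  refine (isBigO_deriv_of_forall_natCast hpoly hnat 0).congr_left fun μ => ?_
  have hθ := θ.hasFDerivAt_of_bilinear (hasDerivAt_newtonCurve_zero m (p μ)).hasFDerivAt
    (hasDerivAt_newtonCurve_zero m (w μ)).hasFDerivAt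
  simpa [newtonCurve_zero, add_comm] using
    ((hθ.hasDerivAt.fun_sub (hasDerivAt_newtonCurve_zero m (B μ))).sub_const
      (θ (p μ 0) (w μ 0))).deriv

end NewtonCurves

section AnalyticFamilies

variable {E W : Type*} [NormedAddCommGroup E] [NormedAddCommGroup W] {x : E}

theorem isBigO_slice_fst {G : ℂ × E → W} {j : ℕ}
    (hO : G =O[𝓝 (0, x)] fun p : ℂ × E => p.1 ^ j) :
    (fun μ => G (μ, x)) =O[𝓝 0] fun μ : ℂ => μ ^ j :=
  hO.comp_tendsto ((Continuous.prodMk_left x).tendsto 0)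

variable [NormedSpace ℂ E] [NormedSpace ℂ W]

theorem isBigO_fst_of_eventually_eq_zero {G : ℂ × E → W} (hG : AnalyticAt ℂ G (0, x))
    (h0 : ∀ᶠ y in 𝓝 x, G (0, y) = 0) : G =O[𝓝 (0, x)] fun p : ℂ × E => p.1 := by
  have hlim : Tendsto (fun p : ℂ × E => (p, ((0 : ℂ), p.2))) (𝓝 (0, x)) (𝓝 ((0, x), (0, x))) :=
    Continuous.tendsto' (by fun_prop) _ _ rfl
  have hzero : ∀ᶠ p : ℂ × E in 𝓝 (0, x), G (0, p.2) = 0 :=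
    (continuous_snd.tendsto' ((0 : ℂ), x) x rfl).eventually h0
  refine ((hG.hasStrictFDerivAt.isBigO_sub.comp_tendsto hlim).congr' ?_ .rfl).trans ?_
  · filter_upwards [hzero] with p hp
    simp [hp]
  · exact IsBigO.of_bound 1 (Eventually.of_forall fun p => by simp [Prod.norm_def])

variable [CompleteSpace W]

theorem eventually_differentiableAt_slice_snd {G : ℂ × E → W} (hG : AnalyticAt ℂ G (0, x)) :
    ∀ᶠ p in 𝓝 ((0 : ℂ), x), DifferentiableAt ℂ (fun y => G (p.1, y)) p.2 := by
  filter_upwards [hG.eventually_analyticAt] with p hp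
  exact DifferentiableAt.comp p.2 (g := G) hp.differentiableAt (by fun_prop)

theorem exists_forall_norm_slice_le {G : ℂ × E → W} (hG : AnalyticAt ℂ G (0, x)) {j : ℕ}
    (hO : G =O[𝓝 (0, x)] fun p : ℂ × E => p.1 ^ j) :
    ∃ C > 0, ∃ r > 0, ∀ μ : ℂ, ‖μ‖ < r → ∀ y, ‖y - x‖ < r →
      DifferentiableAt ℂ (fun y => G (μ, y)) y ∧ ‖G (μ, y)‖ ≤ C * ‖μ‖ ^ j := by
  obtain ⟨C, hC, hbound⟩ := hO.exists_pos
  obtain ⟨r, hr, h⟩ := Metric.eventually_nhds_iff.1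
    ((eventually_differentiableAt_slice_snd hG).and hbound.bound)
  refine ⟨C, hC, r, hr, fun μ hμ y hy => ?_⟩
  have hdist : dist (μ, y) ((0 : ℂ), x) < r := by
    rw [Prod.dist_eq, dist_zero_right, dist_eq_norm]
    exact max_lt hμ hy
  simpa only [norm_pow] using h hdist

theorem isBigO_fderiv_slice_snd {G : ℂ × E → W} (hG : AnalyticAt ℂ G (0, x)) {j : ℕ}
    (hO : G =O[𝓝 (0, x)] fun p : ℂ × E => p.1 ^ j) :
    (fun μ => fderiv ℂ (fun y => G (μ, y)) x) =O[𝓝 0] fun μ : ℂ => μ ^ j := by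
  obtain ⟨C, -, r, hr, h⟩ := exists_forall_norm_slice_le hG hO
  refine IsBigO.of_bound (C / (r / 2)) ?_
  filter_upwards [Metric.ball_mem_nhds (0 : ℂ) hr] with μ hμ
  have hμ := h μ (mem_ball_zero_iff.1 hμ)
  refine (norm_fderiv_le_of_norm_le (half_pos hr)
    (fun w hw => (hμ w (hw.trans_lt (half_lt_self hr))).1)
    (fun w hw => (hμ w (hw.trans_lt (half_lt_self hr))).2)).trans_eq ?_
  rw [norm_pow]
  ring

/- By Cauchy's estimate `G (μ, ·)` is Lipschitz with a constant of order `μ ^ j`. -/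
theorem isBigO_comp_sub {G : ℂ × E → W} (hG : AnalyticAt ℂ G (0, x)) {j : ℕ}
    (hO : G =O[𝓝 (0, x)] fun p : ℂ × E => p.1 ^ j) {F : ℂ × E → E}
    (hF : (fun p => F p - p.2) =O[𝓝 (0, x)] fun p : ℂ × E => p.1) :
    (fun p => G (p.1, F p) - G p) =O[𝓝 (0, x)] fun p : ℂ × E => p.1 ^ (j + 1) := by
  obtain ⟨C, hC, r, hr, h⟩ := exists_forall_norm_slice_le hG hO
  obtain ⟨C', -, hF'⟩ := hF.exists_pos
  have hfst : Tendsto (fun p : ℂ × E => p.1) (𝓝 (0, x)) (𝓝 0) := continuous_fst.tendsto' _ _ rfl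
  have hsnd : Tendsto (fun p : ℂ × E => p.2) (𝓝 (0, x)) (𝓝 x) := continuous_snd.tendsto' _ _ rfl
  have hFx : Tendsto F (𝓝 (0, x)) (𝓝 x) := by
    simpa using (hF.trans_tendsto hfst).add hsnd
  refine IsBigO.of_bound (C / (r / 4) * C') ?_
  filter_upwards [hfst (Metric.ball_mem_nhds _ hr), hsnd (Metric.ball_mem_nhds _ (half_pos hr)),
    hFx (Metric.ball_mem_nhds _ (half_pos hr)), hF'.bound] with p h₁ h₂ h₃ h₄
  rw [Set.mem_preimage, mem_ball_iff_norm] at h₁ h₂ h₃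
  rw [sub_zero] at h₁
  calc ‖G (p.1, F p) - G p‖ ≤ C * ‖p.1‖ ^ j / (r / 4) * ‖F p - p.2‖ :=
        norm_sub_le_of_norm_le (φ := fun y => G (p.1, y)) (y := x) (r := r / 2) (by positivity)
          (fun w hw => (h p.1 h₁ w (by linarith)).1) (fun w hw => (h p.1 h₁ w (by linarith)).2)
          h₂.le h₃.le
    _ ≤ C * ‖p.1‖ ^ j / (r / 4) * (C' * ‖p.1‖) := by gcongr
    _ = C / (r / 4) * C' * ‖p.1 ^ (j + 1)‖ := by rw [norm_pow]; ring

end AnalyticFamilies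

section AnalyticSequences

variable {E W : Type*} [NormedAddCommGroup E] [NormedSpace ℂ E] [NormedAddCommGroup W]
  [NormedSpace ℂ W] {x : E}

theorem analyticAt_fwdDiff_iter {s : E → ℕ → W} (hs : ∀ n, AnalyticAt ℂ (fun y => s y n) x)
    (k n : ℕ) : AnalyticAt ℂ (fun y => (fwdDiff 1)^[k] (s y) n) x := by
  simp only [fwdDiff_iter_eq_sum_shift, ← Int.cast_smul_eq_zsmul ℂ]
  exact Finset.analyticAt_fun_sum _ fun i _ => analyticAt_const.smul (hs _)

theorem analyticAt_truncLog {s : E → ℕ → W} (hs : ∀ n, AnalyticAt ℂ (fun y => s y n) x) (m : ℕ) :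
    AnalyticAt ℂ (fun y => truncLog m (s y)) x :=
  Finset.analyticAt_fun_sum _ fun k _ => analyticAt_const.smul (analyticAt_fwdDiff_iter hs k 0)

theorem hasFDerivAt_fwdDiff_iter {s : E → ℕ → W} {s' : ℕ → E →L[ℂ] W} {k : ℕ}
    (hs : ∀ n ≤ k, HasFDerivAt (fun y => s y n) (s' n) x) :
    HasFDerivAt (fun y => (fwdDiff 1)^[k] (s y) 0) ((fwdDiff 1)^[k] s' 0) x := by
  simp only [fwdDiff_iter_eq_sum_shift, ← Int.cast_smul_eq_zsmul ℂ, zero_add, smul_eq_mul, mul_one]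
  exact HasFDerivAt.fun_sum fun n hn =>
    (hs n (Nat.lt_succ_iff.1 (Finset.mem_range.1 hn))).const_smul _

theorem hasFDerivAt_truncLog {s : E → ℕ → W} {s' : ℕ → E →L[ℂ] W} {m : ℕ}
    (hs : ∀ n ≤ m, HasFDerivAt (fun y => s y n) (s' n) x) :
    HasFDerivAt (fun y => truncLog m (s y)) (truncLog m s') x :=
  HasFDerivAt.fun_sum fun _ hk => (hasFDerivAt_fwdDiff_iter fun n hn =>
    hs n (hn.trans (Finset.mem_Icc.1 hk).2)).const_smul _

/-- A sequence of maps `s · n`, analytic near `(0, x)`, whose `k`-th differences at the index `0`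
are of order `μ ^ k` in the parameter `μ`, uniformly near `x`. -/
structure AnalyticSmallDifferences (s : ℂ × E → ℕ → W) (x : E) : Prop where
  analyticAt : ∀ n, AnalyticAt ℂ (fun p => s p n) (0, x)
  isBigO : ∀ k, (fun p => (fwdDiff 1)^[k] (s p) 0) =O[𝓝 (0, x)] fun p : ℂ × E => p.1 ^ k

namespace AnalyticSmallDifferences

variable {s : ℂ × E → ℕ → W}

theorem hasSmallDifferences (hs : AnalyticSmallDifferences s x) :
    HasSmallDifferences fun μ => s (μ, x) :=
  fun k => isBigO_slice_fst (hs.isBigO k)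

variable [CompleteSpace W]

theorem eventually_hasFDerivAt (hs : AnalyticSmallDifferences s x) (m : ℕ) :
    ∀ᶠ μ in 𝓝 (0 : ℂ), ∀ n ≤ m,
      HasFDerivAt (fun y => s (μ, y) n) (fderiv ℂ (fun y => s (μ, y) n) x) x := by
  refine (eventually_all_finite (Set.finite_Iic m)).2 fun n _ => ?_
  filter_upwards [((Continuous.prodMk_left x).tendsto 0).eventually
    (eventually_differentiableAt_slice_snd (hs.analyticAt n))] with μ hμ
  exact hμ.hasFDerivAt

theorem hasSmallDifferences_fderiv (hs : AnalyticSmallDifferences s x) :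
    HasSmallDifferences fun μ n => fderiv ℂ (fun y => s (μ, y) n) x := fun k => by
  refine (isBigO_fderiv_slice_snd (analyticAt_fwdDiff_iter hs.analyticAt k 0)
    (hs.isBigO k)).congr' ?_ .rfl
  filter_upwards [hs.eventually_hasFDerivAt k] with μ hμ
  exact (hasFDerivAt_fwdDiff_iter hμ).fderiv

end AnalyticSmallDifferences

end AnalyticSequences

section FamilyOrbits

section Basic

variable {E W : Type*} (F : ℂ × E → E) (g : ℂ × E → W)

/-- The skew product `(μ, y) ↦ (μ, F (μ, y))` of a family of maps `F (μ, ·)`. -/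
def familyStep (p : ℂ × E) : ℂ × E := (p.1, F p)

/-- The values of the observable `g` along the orbit of `p` under the family `F`. -/
def familyOrbit (p : ℂ × E) (n : ℕ) : W := g ((familyStep F)^[n] p)

theorem familyOrbit_zero (p : ℂ × E) : familyOrbit F g p 0 = g p := rfl

theorem familyStep_iterate (n : ℕ) (p : ℂ × E) :
    (familyStep F)^[n] p = (p.1, familyOrbit F Prod.snd p n) := by
  refine Prod.ext ?_ rfl
  induction n with
  | zero => rfl
  | succ n ih => rw [Function.iterate_succ_apply', familyStep, ih]

theorem familyOrbit_eq_comp (p : ℂ × E) (n : ℕ) :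
    familyOrbit F g p n = g (p.1, familyOrbit F Prod.snd p n) := by
  rw [familyOrbit, familyStep_iterate]

theorem familyOrbit_snd_succ (p : ℂ × E) (n : ℕ) :
    familyOrbit F Prod.snd p (n + 1) = F (p.1, familyOrbit F Prod.snd p n) := by
  rw [← familyStep_iterate, familyOrbit, Function.iterate_succ_apply', familyStep]

theorem familyOrbit_add (p : ℂ × E) (j n : ℕ) :
    familyOrbit F g p (j + n) = familyOrbit F g (p.1, familyOrbit F Prod.snd p n) j := by
  rw [← familyStep_iterate, familyOrbit, Function.iterate_add_apply, familyOrbit]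

end Basic

variable {E W : Type*} [NormedAddCommGroup W]

theorem fwdDiff_iter_succ_sum_range (b : ℕ → W) (k : ℕ) :
    (fwdDiff 1)^[k + 1] (fun n => ∑ j ∈ Finset.range n, b j) 0 = (fwdDiff 1)^[k] b 0 := by
  have h : (fwdDiff 1 fun n => ∑ j ∈ Finset.range n, b j) = b :=
    funext fun n => Finset.sum_range_succ_sub_sum b
  rw [Function.iterate_succ_apply, h]

theorem fwdDiff_iter_succ_familyOrbit (F : ℂ × E → E) (g : ℂ × E → W) (p : ℂ × E) (k : ℕ) :
    (fwdDiff 1)^[k + 1] (familyOrbit F g p) 0 =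
      (fwdDiff 1)^[k] (familyOrbit F g (familyStep F p)) 0 -
        (fwdDiff 1)^[k] (familyOrbit F g p) 0 := by
  rw [Function.iterate_succ_apply', fwdDiff, ← fwdDiff_iter_comp_add]
  rfl

variable [NormedAddCommGroup E] [NormedSpace ℂ E] [NormedSpace ℂ W]

/-- A family of maps `F (μ, ·)` that is analytic near `(0, x)` and tends to the identity with
rate `O(μ)` as `μ → 0`. -/
structure NearIdentityFamily (F : ℂ × E → E) (x : E) : Prop where
  analyticAt : AnalyticAt ℂ F (0, x)
  isBigO : (fun p => F p - p.2) =O[𝓝 (0, x)] fun p : ℂ × E => p.1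

namespace NearIdentityFamily

variable {F : ℂ × E → E} {g : ℂ × E → W} {x : E}

theorem familyStep_apply_zero (hF : NearIdentityFamily F x) : familyStep F (0, x) = (0, x) := by
  refine Prod.ext rfl (sub_eq_zero.1 ?_)
  obtain ⟨C, hC⟩ := hF.isBigO.bound
  simpa [familyStep] using hC.self_of_nhds

theorem analyticAt_familyStep_iterate (hF : NearIdentityFamily F x) (n : ℕ) :
    AnalyticAt ℂ (familyStep F)^[n] (0, x) := by
  induction n with
  | zero => exact analyticAt_id
  | succ n ih =>
    rw [Function.iterate_succ']
    refine AnalyticAt.comp ?_ ih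
    rw [Function.iterate_fixed hF.familyStep_apply_zero]
    exact analyticAt_fst.prod hF.analyticAt

theorem analyticAt_familyOrbit (hF : NearIdentityFamily F x) (hg : AnalyticAt ℂ g (0, x)) (n : ℕ) :
    AnalyticAt ℂ (fun p => familyOrbit F g p n) (0, x) := by
  refine AnalyticAt.fun_comp ?_ (hF.analyticAt_familyStep_iterate n)
  rwa [Function.iterate_fixed hF.familyStep_apply_zero]

variable [CompleteSpace W]

theorem isBigO_fwdDiff_iter_familyOrbit (hF : NearIdentityFamily F x) (hg : AnalyticAt ℂ g (0, x))
    {j : ℕ} (hO : g =O[𝓝 (0, x)] fun p : ℂ × E => p.1 ^ j) (k : ℕ) :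
    (fun p => (fwdDiff 1)^[k] (familyOrbit F g p) 0) =O[𝓝 (0, x)]
      fun p : ℂ × E => p.1 ^ (j + k) := by
  induction k with
  | zero => exact hO
  | succ k ih =>
    simp only [fwdDiff_iter_succ_familyOrbit]
    exact isBigO_comp_sub (analyticAt_fwdDiff_iter (hF.analyticAt_familyOrbit hg) k 0) ih hF.isBigO

theorem analyticSmallDifferences_familyOrbit (hF : NearIdentityFamily F x)
    (hg : AnalyticAt ℂ g (0, x)) : AnalyticSmallDifferences (familyOrbit F g) x where
  analyticAt := hF.analyticAt_familyOrbit hg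
  isBigO k := by
    have hO : g =O[𝓝 (0, x)] fun p : ℂ × E => p.1 ^ 0 := by
      simpa using hg.continuousAt.isBigO_one ℂ
    simpa using hF.isBigO_fwdDiff_iter_familyOrbit hg hO k

theorem analyticSmallDifferences_sum_familyOrbit (hF : NearIdentityFamily F x)
    (hg : AnalyticAt ℂ g (0, x)) (hO : g =O[𝓝 (0, x)] fun p : ℂ × E => p.1) :
    AnalyticSmallDifferences (fun p n => ∑ j ∈ Finset.range n, familyOrbit F g p j) x where
  analyticAt n := Finset.analyticAt_fun_sum _ fun j _ => hF.analyticAt_familyOrbit hg j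
  isBigO k := by
    cases k with
    | zero => exact isBigO_zero _ _
    | succ k =>
      simp only [fwdDiff_iter_succ_sum_range]
      rw [add_comm k 1]
      exact hF.isBigO_fwdDiff_iter_familyOrbit hg (by simpa using hO) k

end NearIdentityFamily

end FamilyOrbits

section ExactSymplecticFamilies

variable {E : Type*} [NormedAddCommGroup E] [NormedSpace ℂ E]

/-- The maps `F (μ, ·)` near `x` change the Liouville form `y ↦ θ y` by the differential of the
action `A (μ, ·)`. On phase space `θ` is `p · dq`, so that these are exact symplectic maps. -/
structure ExactSymplecticFamily (θ : E →L[ℂ] E →L[ℂ] ℂ) (F : ℂ × E → E) (A : ℂ × E → ℂ) (x : E) :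
    Prop extends NearIdentityFamily F x where
  analyticAt_action : AnalyticAt ℂ A (0, x)
  isBigO_action : A =O[𝓝 (0, x)] fun p : ℂ × E => p.1
  pullback_sub : ∀ᶠ p in 𝓝 ((0 : ℂ), x),
    θ (F p) ∘L fderiv ℂ (fun y => F (p.1, y)) p.2 - θ p.2 = fderiv ℂ (fun y => A (p.1, y)) p.2

/-- The interpolating vector field of order `m` of the map `F (μ, ·)`. -/
noncomputable def interpField (F : ℂ × E → E) (m : ℕ) (p : ℂ × E) : E :=
  truncLog m (familyOrbit F Prod.snd p)

/-- A Hamiltonian of `interpField F m (μ, ·)` up to terms of order `μ ^ (m + 1)`: the Liouville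
form on the field minus the rate of change of the action. -/
noncomputable def interpHam (θ : E →L[ℂ] E →L[ℂ] ℂ) (F : ℂ × E → E) (A : ℂ × E → ℂ) (m : ℕ)
    (p : ℂ × E) : ℂ :=
  θ p.2 (interpField F m p) - truncLog m fun n => ∑ j ∈ Finset.range n, familyOrbit F A p j

/-- The Taylor polynomial of degree `m` of `interpField F m (·, y)` at `μ = 0`, evaluated at
`μ = 1`. -/
noncomputable def truncField (F : ℂ × E → E) (m : ℕ) (y : E) : E :=
  ∑ j ∈ Finset.range (m + 1), taylorCoeff j fun μ => interpField F m (μ, y)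

/-- The Taylor polynomial of degree `m` of `interpHam θ F A m (·, y)` at `μ = 0`, evaluated at
`μ = 1`. -/
noncomputable def truncHam (θ : E →L[ℂ] E →L[ℂ] ℂ) (F : ℂ × E → E) (A : ℂ × E → ℂ) (m : ℕ)
    (y : E) : ℂ :=
  ∑ j ∈ Finset.range (m + 1), taylorCoeff j fun μ => interpHam θ F A m (μ, y)

variable {F : ℂ × E → E} {A : ℂ × E → ℂ} {θ : E →L[ℂ] E →L[ℂ] ℂ} {x : E}

theorem NearIdentityFamily.analyticAt_interpField (h : NearIdentityFamily F x) (m : ℕ) :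
    AnalyticAt ℂ (interpField F m) (0, x) :=
  analyticAt_truncLog (h.analyticAt_familyOrbit analyticAt_snd) m

theorem NearIdentityFamily.analyticAt_slice_interpField (h : NearIdentityFamily F x) (m : ℕ) :
    AnalyticAt ℂ (fun μ : ℂ => interpField F m (μ, x)) 0 :=
  AnalyticAt.fun_comp (f := fun μ : ℂ => (μ, x)) (h.analyticAt_interpField m)
    (analyticAt_id.prod analyticAt_const)

theorem ExactSymplecticFamily.analyticSmallDifferences_action (h : ExactSymplecticFamily θ F A x) :
    AnalyticSmallDifferences (fun p n => ∑ j ∈ Finset.range n, familyOrbit F A p j) x :=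
  h.analyticSmallDifferences_sum_familyOrbit h.analyticAt_action h.isBigO_action

theorem ExactSymplecticFamily.analyticAt_interpHam (h : ExactSymplecticFamily θ F A x) (m : ℕ) :
    AnalyticAt ℂ (interpHam θ F A m) (0, x) := by
  refine AnalyticAt.sub ?_ (analyticAt_truncLog h.analyticSmallDifferences_action.analyticAt m)
  exact (θ.analyticAt_bilinear _).comp (analyticAt_snd.prod (h.analyticAt_interpField m))

theorem ExactSymplecticFamily.analyticAt_truncHam (h : ExactSymplecticFamily θ F A x) (m : ℕ) :
    AnalyticAt ℂ (truncHam θ F A m) x :=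
  Finset.analyticAt_fun_sum _ fun j _ => analyticAt_taylorCoeff_slice j (h.analyticAt_interpHam m)

variable [CompleteSpace E]

namespace NearIdentityFamily

theorem analyticSmallDifferences_snd (h : NearIdentityFamily F x) :
    AnalyticSmallDifferences (familyOrbit F Prod.snd) x :=
  h.analyticSmallDifferences_familyOrbit analyticAt_snd

theorem analyticAt_truncField (h : NearIdentityFamily F x) (m : ℕ) :
    AnalyticAt ℂ (truncField F m) x :=
  Finset.analyticAt_fun_sum _ fun j _ => analyticAt_taylorCoeff_slice j (h.analyticAt_interpField m)

theorem deriv_newtonCurve_sub_interpField_isBigO (h : NearIdentityFamily F x) (m : ℕ) (t : ℂ) :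
    (fun μ => deriv (newtonCurve m (familyOrbit F Prod.snd (μ, x))) t -
      interpField F m (μ, newtonCurve m (familyOrbit F Prod.snd (μ, x)) t)) =O[𝓝 0]
        fun μ : ℂ => μ ^ (m + 1) := by
  refine h.analyticSmallDifferences_snd.hasSmallDifferences.deriv_newtonCurve_sub_isBigO
    (fun _ => rfl) m (h.analyticAt_interpField m) (fun n => .of_forall fun μ => ?_) t
  simp only [familyOrbit_add, interpField]

theorem taylorCoeff_interpField_of_le (h : NearIdentityFamily F x) {j m : ℕ} (hjm : j ≤ m) :
    taylorCoeff j (fun μ => interpField F m (μ, x)) =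
      taylorCoeff j fun μ => interpField F j (μ, x) := by
  exact taylorCoeff_eq_of_isBigO_sub (h.analyticAt_slice_interpField m)
    (h.analyticAt_slice_interpField j)
    (h.analyticSmallDifferences_snd.hasSmallDifferences.truncLog_sub_isBigO hjm) j.lt_succ_self

theorem taylorCoeff_one_interpField (h : NearIdentityFamily F x) {m : ℕ} (hm : 1 ≤ m) :
    taylorCoeff 1 (fun μ => interpField F m (μ, x)) = deriv (fun μ => F (μ, x)) 0 := by
  have hone : (fun μ => interpField F 1 (μ, x)) = fun μ => F (μ, x) - x := by
    funext μ
    simp [interpField, truncLog, fwdDiff, familyOrbit, familyStep]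
  rw [h.taylorCoeff_interpField_of_le hm, hone, taylorCoeff, iteratedDeriv_one, deriv_sub_const]
  simp

end NearIdentityFamily

namespace ExactSymplecticFamily

theorem pullback_iterate_sub (h : ExactSymplecticFamily θ F A x) (n : ℕ) :
    ∀ᶠ p in 𝓝 ((0 : ℂ), x), θ (familyOrbit F Prod.snd p n) ∘L
        fderiv ℂ (fun y => familyOrbit F Prod.snd (p.1, y) n) p.2 - θ p.2 =
      fderiv ℂ (fun y => ∑ j ∈ Finset.range n, familyOrbit F A (p.1, y) j) p.2 := by
  induction n with
  | zero => exact .of_forall fun p => by simp [familyOrbit]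
  | succ n ih =>
    have hlim : Tendsto (familyStep F)^[n] (𝓝 (0, x)) (𝓝 (0, x)) := by
      have hcont := (h.analyticAt_familyStep_iterate n).continuousAt.tendsto
      rwa [Function.iterate_fixed h.familyStep_apply_zero] at hcont
    filter_upwards [ih, hlim.eventually h.pullback_sub,
      hlim.eventually (eventually_differentiableAt_slice_snd h.analyticAt),
      hlim.eventually (eventually_differentiableAt_slice_snd h.analyticAt_action),
      eventually_differentiableAt_slice_snd (h.analyticAt_familyOrbit analyticAt_snd n),
      eventually_differentiableAt_slice_snd (h.analyticSmallDifferences_action.analyticAt n)]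
      with p hn hstep hF hA horbit hsum
    simp only [familyStep_iterate] at hstep hF hA
    have hF' := (hF.hasFDerivAt.comp p.2 horbit.hasFDerivAt).fderiv
    have hA' := (hsum.hasFDerivAt.fun_add (hA.hasFDerivAt.comp p.2 horbit.hasFDerivAt)).fderiv
    simp only [Function.comp_def] at hF' hA'
    simp only [Finset.sum_range_succ, familyOrbit_eq_comp F A _ n, familyOrbit_snd_succ]
    rw [hF', hA', ← hn, ← hstep, ContinuousLinearMap.sub_comp, ContinuousLinearMap.comp_assoc]
    abel

theorem fderiv_interpHam_sub_isBigO (h : ExactSymplecticFamily θ F A x) (m : ℕ) :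
    (fun μ => fderiv ℂ (fun y => interpHam θ F A m (μ, y)) x -
      (θ.flip (interpField F m (μ, x)) - θ (interpField F m (μ, x)))) =O[𝓝 0]
        fun μ : ℂ => μ ^ (m + 1) := by
  have hp := h.analyticSmallDifferences_snd
  have hB := h.analyticSmallDifferences_action
  have hslice := (Continuous.prodMk_left x).tendsto (0 : ℂ)
  have hleibniz := truncLog_leibniz (ContinuousLinearMap.compL ℂ E E ℂ ∘L θ)
    hp.hasSmallDifferences hp.hasSmallDifferences_fderiv hB.hasSmallDifferences_fderiv
    (fun n => by
      filter_upwards [hslice.eventually (h.pullback_iterate_sub n)] with μ hμ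
      simpa [familyOrbit] using hμ) m
  refine hleibniz.congr' ?_ .rfl
  filter_upwards [hp.eventually_hasFDerivAt m, hB.eventually_hasFDerivAt m] with μ hpμ hBμ
  have hX := hasFDerivAt_truncLog hpμ
  have hθ := (θ.hasFDerivAt_of_bilinear (hasFDerivAt_id x) hX).fun_sub (hasFDerivAt_truncLog hBμ)
  have hH : fderiv ℂ (fun y => interpHam θ F A m (μ, y)) x = _ := hθ.fderiv
  rw [hH]
  ext v
  simp only [interpField, familyOrbit, Function.iterate_zero, id_eq, fderiv_fun_id,
    ContinuousLinearMap.comp_apply, ContinuousLinearMap.compL_apply, ContinuousLinearMap.comp_id,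
    add_apply, sub_apply, ContinuousLinearMap.precompR_apply, ContinuousLinearMap.precompL_apply,
    ContinuousLinearMap.flip_apply, ContinuousLinearMap.id_apply]
  ring

/- The error term has order `μ ^ (m + 1)`, so it does not reach the Taylor polynomial. -/
theorem fderiv_truncHam (h : ExactSymplecticFamily θ F A x) (m : ℕ) :
    fderiv ℂ (truncHam θ F A m) x = θ.flip (truncField F m x) - θ (truncField F m x) := by
  have hX := h.analyticAt_slice_interpField m
  ext v
  have hcoeff : ∀ j ∈ Finset.range (m + 1),
      taylorCoeff j (fun μ => fderiv ℂ (fun y => interpHam θ F A m (μ, y)) x v) =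
        (θ v - θ.flip v) (taylorCoeff j fun μ => interpField F m (μ, x)) := fun j hj => by
    rw [← taylorCoeff_continuousLinearMap_comp _ hX]
    refine taylorCoeff_eq_of_isBigO_sub (analyticAt_fderiv_slice_snd (h.analyticAt_interpHam m) v)
      (((θ v - θ.flip v).analyticAt _).comp hX) ?_ (Finset.mem_range.1 hj)
    exact (((ContinuousLinearMap.apply ℂ ℂ v).isBigO_comp _ _).trans
      (h.fderiv_interpHam_sub_isBigO m)).congr_left fun μ => by simp
  calc fderiv ℂ (truncHam θ F A m) x v
      = ∑ j ∈ Finset.range (m + 1),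
          taylorCoeff j (fun μ => fderiv ℂ (fun y => interpHam θ F A m (μ, y)) x v) := by
        unfold truncHam
        rw [fderiv_fun_sum fun j _ =>
          (analyticAt_taylorCoeff_slice j (h.analyticAt_interpHam m)).differentiableAt, sum_apply]
        exact Finset.sum_congr rfl fun j _ =>
          fderiv_taylorCoeff_slice j (h.analyticAt_interpHam m) v
    _ = (θ v - θ.flip v) (truncField F m x) := by
        rw [Finset.sum_congr rfl hcoeff, truncField, map_sum]
    _ = (θ.flip (truncField F m x) - θ (truncField F m x)) v := by simp

end ExactSymplecticFamily

end ExactSymplecticFamilies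

section UniformlyNearIdentityFamilies

theorem sum_Icc_one_eq_sum_range {M : Type*} [AddCommMonoid M] (f : ℕ → M) (m : ℕ) :
    ∑ k ∈ Finset.Icc 1 m, f k = ∑ k ∈ Finset.range m, f (k + 1) := by
  simp only [← Finset.Ico_succ_right_eq_Icc, Finset.sum_Ico_eq_sum_range, Nat.succ_eq_succ,
    Nat.succ_eq_add_one, add_tsub_cancel_right, add_comm 1]

theorem norm_sum_smul_le_two_mul {W : Type*} [NormedAddCommGroup W] [NormedSpace ℂ W] {m : ℕ}
    {c : ℕ → ℂ} {a : ℕ → W} {C : ℝ} (hC : 0 ≤ C) (hc : ∀ k < m, ‖c k‖ ≤ 1)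
    (ha : ∀ k < m, ‖a k‖ ≤ C * (1 / 2) ^ k) : ‖∑ k ∈ Finset.range m, c k • a k‖ ≤ 2 * C :=
  calc ‖∑ k ∈ Finset.range m, c k • a k‖ ≤ ∑ k ∈ Finset.range m, C * (1 / 2) ^ k :=
        norm_sum_le_of_le _ fun k hk => by
          rw [norm_smul]
          exact (mul_le_of_le_one_left (norm_nonneg _) (hc k (Finset.mem_range.1 hk))).trans
            (ha k (Finset.mem_range.1 hk))
    _ = C * ∑ k ∈ Finset.range m, (1 / 2) ^ k := by rw [Finset.mul_sum]
    _ ≤ C * 2 := by gcongr; exact sum_geometric_two_le m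
    _ = 2 * C := mul_comm _ _

theorem sum_range_mul_half_pow_le (n : ℕ) :
    ∑ i ∈ Finset.range n, (3 * (i : ℝ) + 7) * (1 / 2) ^ i ≤ 20 := by
  have hsum : ∑ i ∈ Finset.range n, (3 * (i : ℝ) + 7) * (1 / 2) ^ i =
      20 - (6 * n + 20) * (1 / 2) ^ n := by
    induction n with
    | zero => simp
    | succ n ih => rw [Finset.sum_range_succ, ih, pow_succ]; push_cast; ring
  exact hsum.trans_le (sub_le_self _ (by positivity))

theorem truncLog_eq_sum_range {W : Type*} [NormedAddCommGroup W] [NormedSpace ℂ W] (m : ℕ)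
    (b : ℕ → W) : truncLog m b =
      ∑ k ∈ Finset.range m, ((-1 : ℂ) ^ k / ((k : ℂ) + 1)) • (fwdDiff 1)^[k + 1] b 0 := by
  rw [truncLog, sum_Icc_one_eq_sum_range]
  simp only [Nat.add_sub_cancel, Nat.cast_add, Nat.cast_one]

theorem newtonCurve_eq_add_sum_range {W : Type*} [NormedAddCommGroup W] [NormedSpace ℂ W] (m : ℕ)
    (b : ℕ → W) (t : ℂ) : newtonCurve m b t =
      b 0 + ∑ k ∈ Finset.range m, (binomPoly (k + 1)).eval t • (fwdDiff 1)^[k + 1] b 0 := by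
  rw [newtonCurve, Finset.sum_range_succ', binomPoly_zero, Polynomial.eval_one, one_smul,
    add_comm, Function.iterate_zero, id_eq]

theorem deriv_newtonCurve_eq_sum_range {W : Type*} [NormedAddCommGroup W] [NormedSpace ℂ W]
    (m : ℕ) (b : ℕ → W) (t : ℂ) : deriv (newtonCurve m b) t =
      ∑ k ∈ Finset.range m, (binomPoly (k + 1)).derivative.eval t • (fwdDiff 1)^[k + 1] b 0 := by
  rw [(hasDerivAt_newtonCurve m b t).deriv, Finset.sum_range_succ', binomPoly_zero,
    Polynomial.derivative_one, Polynomial.eval_zero, zero_smul, add_zero]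

theorem closedBall_subset_of_norm_sub_le {E : Type*} [NormedAddCommGroup E] {D : Set E} {y z : E}
    {r s : ℝ} (hr : Metric.closedBall y r ⊆ D) (h : s + ‖z - y‖ ≤ r) : Metric.closedBall z s ⊆ D :=
  (Metric.closedBall_subset_closedBall' (by rwa [dist_eq_norm])).trans hr

variable {E : Type*} [NormedAddCommGroup E]

/-- The pairs `(μ, y)` such that `D` contains a ball around `y` with more than three times the
radius `|μ| ε`. If `u` has size `ε` on `D`, then `μ • u` is a contraction near `y`. -/
def paramRoom (D : Set E) (ε : ℝ) : Set (ℂ × E) :=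
  {p | ∃ h > ‖p.1‖ * ε, Metric.closedBall p.2 (3 * h) ⊆ D}

theorem isOpen_paramRoom (D : Set E) (ε : ℝ) : IsOpen (paramRoom D ε) := by
  refine isOpen_iff_mem_nhds.2 fun p ⟨h, hh, hr⟩ => ?_
  obtain ⟨h', hh', hlt⟩ := exists_between hh
  have hμ : ∀ᶠ z : ℂ × E in 𝓝 p, ‖z.1‖ * ε < h' :=
    (Continuous.tendsto (by fun_prop) p).eventually (gt_mem_nhds hh')
  have hy : ∀ᶠ z : ℂ × E in 𝓝 p, ‖z.2 - p.2‖ < 3 * (h - h') :=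
    (Continuous.tendsto' (by fun_prop) p 0 (by simp)).eventually (gt_mem_nhds (by linarith))
  filter_upwards [hμ, hy] with z hzμ hzy
  exact ⟨h', hzμ, closedBall_subset_of_norm_sub_le hr (by linarith)⟩

theorem mem_paramRoom {D : Set E} {ε h : ℝ} {p : ℂ × E} (hh : 0 < h) (hμ : ‖p.1‖ * ε ≤ h)
    (hr : Metric.closedBall p.2 (4 * h) ⊆ D) : p ∈ paramRoom D ε :=
  ⟨4 / 3 * h, by linarith,
    closedBall_subset_of_norm_sub_le hr (by rw [sub_self, norm_zero]; linarith)⟩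

theorem zero_mem_paramRoom {D : Set E} {ε r : ℝ} {x : E} (hr : 0 < r)
    (hx : Metric.closedBall x r ⊆ D) : ((0 : ℂ), x) ∈ paramRoom D ε :=
  mem_paramRoom (h := r / 4) (by positivity) (by simpa using by positivity)
    (by convert hx using 2; ring)

variable [NormedSpace ℂ E]

/-- The maps `F (μ, ·)` are analytic on `D` and `|μ| ε`-close to the identity, as far as `D` leaves
room. -/
structure UniformlyNearIdentity (F : ℂ × E → E) (D : Set E) (ε : ℝ) : Prop where
  pos : 0 < ε
  analyticAt : ∀ p ∈ paramRoom D ε, AnalyticAt ℂ F p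
  norm_sub_le : ∀ p ∈ paramRoom D ε, ‖F p - p.2‖ ≤ ‖p.1‖ * ε

namespace UniformlyNearIdentity

variable {F : ℂ × E → E} {D : Set E} {ε : ℝ} (hF : UniformlyNearIdentity F D ε)
include hF

theorem nearIdentityFamily {x : E} {r : ℝ} (hr : 0 < r) (hx : Metric.closedBall x r ⊆ D) :
    NearIdentityFamily F x := by
  have hroom := zero_mem_paramRoom (ε := ε) hr hx
  have hF0 := hF.analyticAt _ hroom
  refine ⟨hF0, isBigO_fst_of_eventually_eq_zero (hF0.sub analyticAt_snd) ?_⟩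
  filter_upwards [((Continuous.prodMk_right (0 : ℂ)).tendsto x).eventually
    ((isOpen_paramRoom D ε).mem_nhds hroom)] with y hy
  simpa using hF.norm_sub_le (0, y) hy

/- Since `Δ ^ (k + 1) y = Δ ^ k (F y) - Δ ^ k y`, Cauchy's estimate on a ball of radius `2 h` halves
the bound, at the price of the room `3 h`. -/
theorem analyticAt_and_norm_fwdDiff_iter_succ_le {h : ℝ} (hh : 0 < h) (k : ℕ) :
    ∀ p : ℂ × E, ‖p.1‖ * ε ≤ h → Metric.closedBall p.2 ((3 * k + 4) * h) ⊆ D →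
      AnalyticAt ℂ (fun p => (fwdDiff 1)^[k + 1] (familyOrbit F Prod.snd p) 0) p ∧
        ‖(fwdDiff 1)^[k + 1] (familyOrbit F Prod.snd p) 0‖ ≤ ‖p.1‖ * ε * (1 / 2) ^ k := by
  induction k with
  | zero =>
    intro p hμ hr
    have hroom := mem_paramRoom hh hμ (by simpa using hr)
    rw [pow_zero, mul_one]
    exact ⟨(hF.analyticAt p hroom).sub analyticAt_snd, hF.norm_sub_le p hroom⟩
  | succ k ih =>
    intro p hμ hr
    push_cast at hr
    have hkh : 0 ≤ (k : ℝ) * h := by positivity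
    have hroom := mem_paramRoom hh hμ
      (closedBall_subset_of_norm_sub_le hr (by rw [sub_self, norm_zero]; linarith))
    have hstep : ‖F p - p.2‖ ≤ h := (hF.norm_sub_le p hroom).trans hμ
    have hball : ∀ w : E, ‖w - p.2‖ ≤ h + 2 * h → _ := fun w hw =>
      ih (p.1, w) hμ (closedBall_subset_of_norm_sub_le hr (by linarith))
    have hself : ‖p.2 - p.2‖ ≤ h := by simpa using hh.le
    simp only [fwdDiff_iter_succ_familyOrbit _ _ _ (k + 1)]
    constructor
    · have hcomp : AnalyticAt ℂ _ p := (hball _ (hstep.trans (by linarith))).1.fun_comp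
        (f := fun p => (p.1, F p)) (analyticAt_fst.prod (hF.analyticAt p hroom))
      exact hcomp.sub (hball p.2 (hself.trans (by linarith))).1
    · have hlip := norm_sub_le_of_norm_le
        (φ := fun y => (fwdDiff 1)^[k + 1] (familyOrbit F Prod.snd (p.1, y)) 0)
        (ρ := 2 * h) (M := ‖p.1‖ * ε * (1 / 2) ^ k) (by positivity)
        (fun w hw => (hball w hw).1.differentiableAt.comp w (by fun_prop))
        (fun w hw => (hball w hw).2) hself hstep
      have hε := hF.pos
      calc _ ≤ ‖p.1‖ * ε * (1 / 2) ^ k / (2 * h) * h := hlip.trans (by gcongr)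
        _ = ‖p.1‖ * ε * (1 / 2) ^ (k + 1) := by rw [pow_succ]; field_simp

section Bounds

variable {h : ℝ} {m : ℕ} {p : ℂ × E}

theorem analyticAt_and_norm_fwdDiff_le (hh : 0 < h) (hμ : ‖p.1‖ * ε ≤ h)
    (hr : Metric.closedBall p.2 ((3 * m + 1) * h) ⊆ D) {k : ℕ} (hk : k < m) :
    AnalyticAt ℂ (fun p => (fwdDiff 1)^[k + 1] (familyOrbit F Prod.snd p) 0) p ∧
      ‖(fwdDiff 1)^[k + 1] (familyOrbit F Prod.snd p) 0‖ ≤ ‖p.1‖ * ε * (1 / 2) ^ k := by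
  refine hF.analyticAt_and_norm_fwdDiff_iter_succ_le hh k p hμ
    (closedBall_subset_of_norm_sub_le hr ?_)
  have hkm : (k : ℝ) + 1 ≤ m := by exact_mod_cast hk
  rw [sub_self, norm_zero]
  nlinarith

theorem analyticAt_interpField (hh : 0 < h) (hμ : ‖p.1‖ * ε ≤ h)
    (hr : Metric.closedBall p.2 ((3 * m + 1) * h) ⊆ D) : AnalyticAt ℂ (interpField F m) p := by
  have hsum : interpField F m = fun p => _ := funext fun _ => truncLog_eq_sum_range m _
  rw [hsum]
  exact Finset.analyticAt_fun_sum _ fun k hk =>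
    analyticAt_const.smul (hF.analyticAt_and_norm_fwdDiff_le hh hμ hr (Finset.mem_range.1 hk)).1

theorem norm_interpField_le (hh : 0 < h) (hμ : ‖p.1‖ * ε ≤ h)
    (hr : Metric.closedBall p.2 ((3 * m + 1) * h) ⊆ D) :
    ‖interpField F m p‖ ≤ 2 * (‖p.1‖ * ε) := by
  have hε := hF.pos
  rw [interpField, truncLog_eq_sum_range]
  refine norm_sum_smul_le_two_mul (by positivity) (fun k _ => ?_)
    fun k hk => (hF.analyticAt_and_norm_fwdDiff_le hh hμ hr hk).2
  rw [norm_div, norm_pow, norm_neg, norm_one, one_pow, ← Nat.cast_succ, Complex.norm_natCast]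
  exact div_le_one_of_le₀ (by simp) (by positivity)

theorem norm_newtonCurve_sub_le (hh : 0 < h) (hμ : ‖p.1‖ * ε ≤ h)
    (hr : Metric.closedBall p.2 ((3 * m + 1) * h) ⊆ D) {t : ℝ} (ht : t ∈ Set.Icc (0 : ℝ) 1) :
    ‖newtonCurve m (familyOrbit F Prod.snd p) t - p.2‖ ≤ 2 * (‖p.1‖ * ε) := by
  have hε := hF.pos
  rw [newtonCurve_eq_add_sum_range, familyOrbit_zero, add_sub_cancel_left]
  refine norm_sum_smul_le_two_mul (by positivity) (fun k _ => ?_)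
    fun k hk => (hF.analyticAt_and_norm_fwdDiff_le hh hμ hr hk).2
  refine (norm_eval_binomPoly_succ_le k ht).trans (div_le_one_of_le₀ ?_ (by positivity))
  exact ht.2.trans (by simp)

theorem norm_deriv_newtonCurve_le (hh : 0 < h) (hμ : ‖p.1‖ * ε ≤ h)
    (hr : Metric.closedBall p.2 ((3 * m + 1) * h) ⊆ D) {t : ℝ} (ht : t ∈ Set.Icc (0 : ℝ) 1) :
    ‖deriv (newtonCurve m (familyOrbit F Prod.snd p)) t‖ ≤ 2 * (‖p.1‖ * ε) := by
  have hε := hF.pos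
  rw [deriv_newtonCurve_eq_sum_range]
  refine norm_sum_smul_le_two_mul (by positivity) (fun k _ => ?_)
    fun k hk => (hF.analyticAt_and_norm_fwdDiff_le hh hμ hr hk).2
  exact (norm_eval_derivative_binomPoly_succ_le k ht).trans
    (div_le_one_of_le₀ (by simp) (by positivity))

theorem analyticAt_newtonCurve (hh : 0 < h) (hμ : ‖p.1‖ * ε ≤ h)
    (hr : Metric.closedBall p.2 ((3 * m + 1) * h) ⊆ D) (t : ℂ) :
    AnalyticAt ℂ (fun p => newtonCurve m (familyOrbit F Prod.snd p) t) p := by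
  simp only [newtonCurve_eq_add_sum_range, familyOrbit_zero]
  refine analyticAt_snd.add ?_
  exact Finset.analyticAt_fun_sum _ fun k hk =>
    analyticAt_const.smul (hF.analyticAt_and_norm_fwdDiff_le hh hμ hr (Finset.mem_range.1 hk)).1

theorem analyticAt_deriv_newtonCurve (hh : 0 < h) (hμ : ‖p.1‖ * ε ≤ h)
    (hr : Metric.closedBall p.2 ((3 * m + 1) * h) ⊆ D) (t : ℂ) :
    AnalyticAt ℂ (fun p => deriv (newtonCurve m (familyOrbit F Prod.snd p)) t) p := by
  simp only [deriv_newtonCurve_eq_sum_range]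
  exact Finset.analyticAt_fun_sum _ fun k hk =>
    analyticAt_const.smul (hF.analyticAt_and_norm_fwdDiff_le hh hμ hr (Finset.mem_range.1 hk)).1

end Bounds

section CauchyTails

variable {R : ℝ} {m : ℕ} {x : E}

theorem differentiableAt_slice_interpField (hR : 0 < R)
    (hr : Metric.closedBall x ((3 * m + 1) * (R * ε)) ⊆ D) {μ : ℂ} (hμ : ‖μ‖ ≤ R) :
    DifferentiableAt ℂ (fun μ => interpField F m (μ, x)) μ := by
  have hε := hF.pos
  exact DifferentiableAt.comp (g := interpField F m) μ (hF.analyticAt_interpField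
    (p := (μ, x)) (h := R * ε) (by positivity) (by gcongr) hr).differentiableAt (by fun_prop)

theorem norm_slice_interpField_le (hR : 0 < R)
    (hr : Metric.closedBall x ((3 * m + 1) * (R * ε)) ⊆ D) {μ : ℂ} (hμ : ‖μ‖ ≤ R) :
    ‖interpField F m (μ, x)‖ ≤ 2 * (R * ε) := by
  have hε := hF.pos
  exact (hF.norm_interpField_le (p := (μ, x)) (h := R * ε) (by positivity) (by gcongr) hr).trans
    (by gcongr)

theorem taylorCoeff_zero_interpField (hR : 0 < R)
    (hr : Metric.closedBall x ((3 * m + 1) * (R * ε)) ⊆ D) :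
    taylorCoeff 0 (fun μ => interpField F m (μ, x)) = 0 := by
  have hε := hF.pos
  have h0 := hF.norm_interpField_le (p := (0, x)) (h := R * ε) (by positivity)
    (by simpa using by positivity) hr
  simpa [taylorCoeff] using h0

theorem truncField_eq_sum_range (hR : 0 < R)
    (hr : Metric.closedBall x ((3 * m + 1) * (R * ε)) ⊆ D) : truncField F m x =
      ∑ j ∈ Finset.range m, taylorCoeff (j + 1) fun μ => interpField F m (μ, x) := by
  rw [truncField, Finset.sum_range_succ', hF.taylorCoeff_zero_interpField hR hr, add_zero]

variable [CompleteSpace E]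

theorem norm_taylorCoeff_interpField_le (hR : 0 < R)
    (hr : Metric.closedBall x ((3 * m + 1) * (R * ε)) ⊆ D) (j : ℕ) :
    ‖taylorCoeff j fun μ => interpField F m (μ, x)‖ ≤ 2 * (R * ε) / R ^ j :=
  norm_taylorCoeff_le hR (fun _ => hF.differentiableAt_slice_interpField hR hr)
    (fun _ => hF.norm_slice_interpField_le hR hr) j

theorem norm_interpField_sub_truncField_le (hR : 1 < R)
    (hr : Metric.closedBall x ((3 * m + 1) * (R * ε)) ⊆ D) :
    ‖interpField F m (1, x) - truncField F m x‖ ≤ 2 * (R * ε) / R ^ (m + 1) / (1 - 1 / R) :=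
  norm_sub_sum_taylorCoeff_le hR
    (fun _ => hF.differentiableAt_slice_interpField (one_pos.trans hR) hr)
    (fun _ => hF.norm_slice_interpField_le (one_pos.trans hR) hr) (m + 1)

theorem norm_truncField_le (hr : Metric.closedBall x ((3 * m + 1) * (2 * ε)) ⊆ D) :
    ‖truncField F m x‖ ≤ 4 * ε := by
  have hε := hF.pos
  have hsum := norm_sum_smul_le_two_mul (m := m) (c := fun _ => 1) (C := 2 * ε)
    (a := fun j => taylorCoeff (j + 1) fun μ => interpField F m (μ, x)) (by positivity) (by simp)
    fun k _ => (hF.norm_taylorCoeff_interpField_le two_pos hr _).trans_eq (by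
      rw [pow_succ, one_div, inv_pow]; field)
  simp only [one_smul] at hsum
  rw [hF.truncField_eq_sum_range two_pos hr]
  linarith

/- As the `j`-th coefficient does not depend on the order `m ≥ j`, it can be estimated with
`m = j`, which leaves room for a radius `R` proportional to `1 / j`. -/
theorem norm_taylorCoeff_interpField_succ_succ_le {r : ℝ} (hx : Metric.closedBall x r ⊆ D) {i : ℕ}
    (hi : (3 * (i : ℝ) + 7) * (2 * ε) ≤ r) (him : i + 2 ≤ m) :
    ‖taylorCoeff (i + 2) fun μ => interpField F m (μ, x)‖ ≤
      2 * ε ^ 2 / r * ((3 * i + 7) * (1 / 2) ^ i) := by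
  have hε := hF.pos
  have hr : 0 < r := lt_of_lt_of_le (by positivity) hi
  set R := r / ((3 * (i : ℝ) + 7) * ε) with hR
  have hR0 : 0 < R := by positivity
  have hR2 : 1 / R ≤ 1 / 2 :=
    one_div_le_one_div_of_le two_pos (by rw [hR, le_div_iff₀ (by positivity)]; linarith)
  have hroom : Metric.closedBall x ((3 * ((i + 2 : ℕ) : ℝ) + 1) * (R * ε)) ⊆ D := by
    convert hx using 2
    rw [hR]
    push_cast
    field
  rw [(hF.nearIdentityFamily hr hx).taylorCoeff_interpField_of_le him]
  calc ‖taylorCoeff (i + 2) fun μ => interpField F (i + 2) (μ, x)‖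
      ≤ 2 * (R * ε) / R ^ (i + 2) := hF.norm_taylorCoeff_interpField_le hR0 hroom _
    _ = 2 * ε / R * (1 / R) ^ i := by rw [pow_add, one_div, inv_pow]; field
    _ ≤ 2 * ε / R * (1 / 2) ^ i := by gcongr
    _ = 2 * ε ^ 2 / r * ((3 * i + 7) * (1 / 2) ^ i) := by rw [hR]; field

theorem norm_truncField_sub_deriv_le {r : ℝ} (hm : 1 ≤ m) (hx : Metric.closedBall x r ⊆ D)
    (hmr : (3 * m + 1) * (2 * ε) ≤ r) :
    ‖truncField F m x - deriv (fun μ => F (μ, x)) 0‖ ≤ 40 * ε ^ 2 / r := by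
  have hε := hF.pos
  have hr : 0 < r := lt_of_lt_of_le (by positivity) hmr
  obtain ⟨n, rfl⟩ := Nat.exists_eq_add_of_le' hm
  rw [hF.truncField_eq_sum_range two_pos ((Metric.closedBall_subset_closedBall hmr).trans hx),
    Finset.sum_range_succ', zero_add,
    (hF.nearIdentityFamily hr hx).taylorCoeff_one_interpField hm, add_sub_cancel_right]
  calc _ ≤ ∑ i ∈ Finset.range n, 2 * ε ^ 2 / r * ((3 * (i : ℝ) + 7) * (1 / 2) ^ i) :=
        norm_sum_le_of_le _ fun i hi => by
          have hin : (i : ℝ) + 1 ≤ n := by exact_mod_cast Finset.mem_range.1 hi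
          refine hF.norm_taylorCoeff_interpField_succ_succ_le hx (le_trans ?_ hmr)
            (by have := Finset.mem_range.1 hi; lia)
          push_cast
          gcongr ?_ * _
          linarith
    _ = 2 * ε ^ 2 / r * ∑ i ∈ Finset.range n, (3 * (i : ℝ) + 7) * (1 / 2) ^ i := by
        rw [Finset.mul_sum]
    _ ≤ 2 * ε ^ 2 / r * 20 := by gcongr; exact sum_range_mul_half_pow_le n
    _ = 40 * ε ^ 2 / r := by ring

theorem norm_deriv_newtonCurve_sub_interpField_le (hR : 1 < R)
    (hr : Metric.closedBall x ((3 * m + 3) * (R * ε)) ⊆ D) {t : ℝ} (ht : t ∈ Set.Icc (0 : ℝ) 1) :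
    ‖deriv (newtonCurve m (familyOrbit F Prod.snd (1, x))) t -
        interpField F m (1, newtonCurve m (familyOrbit F Prod.snd (1, x)) t)‖ ≤
      4 * (R * ε) / R ^ (m + 1) / (1 - 1 / R) := by
  have hε := hF.pos
  have hR0 : 0 < R := one_pos.trans hR
  have hRε : 0 < R * ε := by positivity
  have hx : Metric.closedBall x ((3 * m + 1) * (R * ε)) ⊆ D :=
    closedBall_subset_of_norm_sub_le hr (by rw [sub_self, norm_zero]; linarith)
  let g : ℂ → E := fun μ => deriv (newtonCurve m (familyOrbit F Prod.snd (μ, x))) t -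
    interpField F m (μ, newtonCurve m (familyOrbit F Prod.snd (μ, x)) t)
  have hroom : ∀ μ : ℂ, ‖μ‖ ≤ R → ‖μ‖ * ε ≤ R * ε := fun μ hμ => by gcongr
  have hcurve : ∀ μ : ℂ, ‖μ‖ ≤ R → Metric.closedBall
      (newtonCurve m (familyOrbit F Prod.snd (μ, x)) t) ((3 * m + 1) * (R * ε)) ⊆ D :=
    fun μ hμ => closedBall_subset_of_norm_sub_le hr (by
      have := hF.norm_newtonCurve_sub_le (p := (μ, x)) hRε (hroom μ hμ) hx ht
      linarith [hroom μ hμ])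
  have hg : ∀ μ : ℂ, ‖μ‖ ≤ R → AnalyticAt ℂ g μ := fun μ hμ => by
    have hpair : AnalyticAt ℂ (fun μ : ℂ => (μ, x)) μ := analyticAt_id.prod analyticAt_const
    have hderiv := AnalyticAt.fun_comp (f := fun μ : ℂ => (μ, x))
      (hF.analyticAt_deriv_newtonCurve hRε (hroom μ hμ) hx t) hpair
    have hpoint := AnalyticAt.fun_comp (f := fun μ : ℂ => (μ, x))
      (hF.analyticAt_newtonCurve hRε (hroom μ hμ) hx t) hpair
    exact hderiv.sub (AnalyticAt.fun_comp (f := fun μ => (μ, newtonCurve _ _ _))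
      (hF.analyticAt_interpField hRε (hroom μ hμ) (hcurve μ hμ)) (analyticAt_id.prod hpoint))
  have hM : ∀ μ : ℂ, ‖μ‖ ≤ R → ‖g μ‖ ≤ 4 * (R * ε) := fun μ hμ => by
    refine (_root_.norm_sub_le _ _).trans ?_
    linarith [hF.norm_deriv_newtonCurve_le (p := (μ, x)) hRε (hroom μ hμ) hx ht, hroom μ hμ,
      hF.norm_slice_interpField_le hR0 (hcurve μ hμ) hμ]
  have hO := (hF.nearIdentityFamily (by positivity) hr).deriv_newtonCurve_sub_interpField_isBigO m t
  have htail := norm_sub_sum_taylorCoeff_le hR (fun μ hμ => (hg μ hμ).differentiableAt) hM (m + 1)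
  rwa [Finset.sum_eq_zero fun j hj => taylorCoeff_eq_zero_of_isBigO (hg 0 (by simpa using hR0.le))
    hO (Finset.mem_range.1 hj), sub_zero] at htail

end CauchyTails

end UniformlyNearIdentity

end UniformlyNearIdentityFamilies

section ImplicitEquation

theorem mk_snd_mem_closedBall {V W : Type*} [NormedAddCommGroup V]
    [NormedAddCommGroup W] {P : V} {y : V × W} {r : ℝ}
    (h : ‖P - y.1‖ ≤ r) : (P, y.2) ∈ Metric.closedBall y r := by
  rw [mem_closedBall_iff_norm, Prod.norm_def]
  exact max_le h (by simpa using (norm_nonneg _).trans h)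

variable {V W : Type*} [NormedAddCommGroup V] [NormedSpace ℂ V]

/-- `P` solves the implicit equation `y = P + μ u(P, q)` inside `D`, where `p = (μ, y, q)`. -/
def IsImplicitSolution (u : V × W → V) (D : Set (V × W)) (p : ℂ × V × W) (P : V) : Prop :=
  (P, p.2.2) ∈ D ∧ p.2.1 = P + p.1 • u (P, p.2.2)

/-- The solution of the implicit equation `y = P + μ u(P, q)`, with a junk value where there is
none. -/
noncomputable def implicitSolution (u : V × W → V) (D : Set (V × W)) (p : ℂ × V × W) : V :=
  Classical.epsilon (IsImplicitSolution u D p)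

variable {u : V × W → V} {D : Set (V × W)} {ε : ℝ} {p : ℂ × V × W} {P P' : V}

theorem IsImplicitSolution.norm_sub_le (hP : IsImplicitSolution u D p P)
    (hε : ∀ x ∈ D, ‖u x‖ ≤ ε) : ‖P - p.2.1‖ ≤ ‖p.1‖ * ε := by
  rw [hP.2, sub_add_cancel_left, norm_neg, norm_smul]
  gcongr
  exact hε _ hP.1

theorem norm_smul_apply_le (hε : ∀ x ∈ D, ‖u x‖ ≤ ε) {μ : ℂ} {x : V × W} {h : ℝ} (hx : x ∈ D)
    (hμ : ‖μ‖ * ε ≤ h) : ‖μ • u x‖ ≤ h := by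
  rw [norm_smul]
  exact le_trans (by gcongr; exact hε x hx) hμ

variable [NormedAddCommGroup W]

theorem IsImplicitSolution.mem_nhds (hP : IsImplicitSolution u D p P)
    (hε : ∀ x ∈ D, ‖u x‖ ≤ ε) (hp : p ∈ paramRoom D ε) : D ∈ 𝓝 (P, p.2.2) := by
  obtain ⟨h, hh, hD⟩ := hp
  have hPh := (hP.norm_sub_le hε).trans_lt hh
  refine mem_of_superset (Metric.closedBall_mem_nhds _ ((norm_nonneg _).trans_lt hPh))
    (closedBall_subset_of_norm_sub_le hD ?_)
  have := mk_snd_mem_closedBall hPh.le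
  rw [mem_closedBall_iff_norm] at this
  linarith [(norm_nonneg _).trans_lt hPh]

variable [NormedSpace ℂ W]

theorem differentiableAt_smul_slice_fst (hu : AnalyticOnNhd ℂ u D) {μ : ℂ} {q : W}
    (hP : (P, q) ∈ D) : DifferentiableAt ℂ (fun P => μ • u (P, q)) P := by
  have := (hu _ hP).differentiableAt
  fun_prop

theorem norm_smul_slice_sub_le (hu : AnalyticOnNhd ℂ u D) (hε : ∀ x ∈ D, ‖u x‖ ≤ ε) {h : ℝ}
    (hh : 0 < h) (hμ : ‖p.1‖ * ε ≤ h) (hD : Metric.closedBall p.2 (3 * h) ⊆ D)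
    (hP : ‖P - p.2.1‖ ≤ h) (hP' : ‖P' - p.2.1‖ ≤ h) :
    ‖p.1 • u (P', p.2.2) - p.1 • u (P, p.2.2)‖ ≤ 1 / 2 * ‖P' - P‖ := by
  have hmem : ∀ w : V, ‖w - p.2.1‖ ≤ h + 2 * h → (w, p.2.2) ∈ D := fun w hw =>
    hD (mk_snd_mem_closedBall (by linarith))
  have := norm_sub_le_of_norm_le (M := h) (φ := fun P => p.1 • u (P, p.2.2)) (ρ := 2 * h)
    (by positivity) (fun w hw => differentiableAt_smul_slice_fst hu (hmem w hw))
    (fun w hw => norm_smul_apply_le hε (hmem w hw) hμ) hP hP'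
  rwa [show h / (2 * h) = 1 / 2 by field] at this

theorem norm_fderiv_smul_slice_le (hu : AnalyticOnNhd ℂ u D) (hε : ∀ x ∈ D, ‖u x‖ ≤ ε) {h : ℝ}
    (hh : 0 < h) (hμ : ‖p.1‖ * ε ≤ h) (hD : Metric.closedBall p.2 (3 * h) ⊆ D)
    (hP : ‖P - p.2.1‖ ≤ h) : ‖fderiv ℂ (fun P => p.1 • u (P, p.2.2)) P‖ ≤ 1 / 2 := by
  have hmem : ∀ w : V, ‖w - P‖ ≤ 2 * h → (w, p.2.2) ∈ D := fun w hw =>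
    hD (mk_snd_mem_closedBall (by linarith [norm_sub_le_norm_sub_add_norm_sub w P p.2.1]))
  have := norm_fderiv_le_of_norm_le (M := h) (φ := fun P => p.1 • u (P, p.2.2)) (ρ := 2 * h)
    (z := P) (by positivity) (fun w hw => differentiableAt_smul_slice_fst hu (hmem w hw))
    (fun w hw => norm_smul_apply_le hε (hmem w hw) hμ)
  rwa [show h / (2 * h) = 1 / 2 by field] at this

theorem IsImplicitSolution.unique (hu : AnalyticOnNhd ℂ u D) (hε : ∀ x ∈ D, ‖u x‖ ≤ ε)
    (hp : p ∈ paramRoom D ε) (hP : IsImplicitSolution u D p P)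
    (hP' : IsImplicitSolution u D p P') : P = P' := by
  obtain ⟨h, hh, hD⟩ := hp
  have hPh := (hP.norm_sub_le hε).trans hh.le
  have hle := norm_smul_slice_sub_le hu hε
    (((norm_nonneg _).trans (hP.norm_sub_le hε)).trans_lt hh) hh.le hD hPh
    ((hP'.norm_sub_le hε).trans hh.le)
  rw [← sub_eq_of_eq_add' hP.2, ← sub_eq_of_eq_add' hP'.2, sub_sub_sub_cancel_left,
    norm_sub_rev P' P] at hle
  exact sub_eq_zero.1 (norm_le_zero_iff.1 (by linarith))

theorem exists_isImplicitSolution [CompleteSpace V] (hu : AnalyticOnNhd ℂ u D) (h0 : 0 ≤ ε)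
    (hε : ∀ x ∈ D, ‖u x‖ ≤ ε) (hp : p ∈ paramRoom D ε) : ∃ P, IsImplicitSolution u D p P := by
  obtain ⟨h, hh, hD⟩ := hp
  have hpos : 0 < h := lt_of_le_of_lt (by positivity) hh
  have hmem : ∀ {w : V}, ‖w - p.2.1‖ ≤ h → (w, p.2.2) ∈ D := fun hw =>
    hD (mk_snd_mem_closedBall (by linarith))
  let T : V → V := fun P => p.2.1 - p.1 • u (P, p.2.2)
  have hT : Set.MapsTo T (Metric.closedBall p.2.1 h) (Metric.closedBall p.2.1 h) := fun P hP => by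
    rw [mem_closedBall_iff_norm] at hP ⊢
    simpa only [T, sub_sub_cancel_left, norm_neg] using norm_smul_apply_le hε (hmem hP) hh.le
  have hcontr : ContractingWith (1 / 2) (hT.restrict T _ _) := by
    refine ⟨by rw [← NNReal.coe_lt_coe]; norm_num, LipschitzWith.of_dist_le_mul ?_⟩
    rintro ⟨a, ha⟩ ⟨b, hb⟩
    rw [mem_closedBall_iff_norm] at ha hb
    have := norm_smul_slice_sub_le hu hε hpos hh.le hD ha hb
    rw [norm_sub_rev b a] at this
    simpa [Subtype.dist_eq, dist_eq_norm, T] using this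
  obtain ⟨P, hP, hfix, -⟩ := hcontr.exists_fixedPoint' Metric.isClosed_closedBall.isComplete hT
    (Metric.mem_closedBall_self hpos.le) (edist_ne_top _ _)
  rw [mem_closedBall_iff_norm] at hP
  exact ⟨P, hmem hP, sub_eq_iff_eq_add.1 hfix⟩

theorem isImplicitSolution_implicitSolution [CompleteSpace V] (hu : AnalyticOnNhd ℂ u D)
    (h0 : 0 ≤ ε) (hε : ∀ x ∈ D, ‖u x‖ ≤ ε) (hp : p ∈ paramRoom D ε) :
    IsImplicitSolution u D p (implicitSolution u D p) :=
  Classical.epsilon_spec (exists_isImplicitSolution hu h0 hε hp)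

theorem isInvertible_id_add [CompleteSpace V] {L : V →L[ℂ] V} (hL : ‖L‖ < 1) :
    (ContinuousLinearMap.id ℂ V + L).IsInvertible := by
  refine ⟨ContinuousLinearEquiv.unitsEquiv ℂ V (Units.oneSub (-L) (by rwa [norm_neg])), ?_⟩
  ext v
  simp

theorem analyticAt_implicitSolution [CompleteSpace V] [CompleteSpace W]
    (hu : AnalyticOnNhd ℂ u D) (h0 : 0 ≤ ε) (hε : ∀ x ∈ D, ‖u x‖ ≤ ε) (hp : p ∈ paramRoom D ε) :
    AnalyticAt ℂ (implicitSolution u D) p := by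
  have hsol := isImplicitSolution_implicitSolution hu h0 hε hp
  set P := implicitSolution u D p
  let G : (ℂ × V × W) × V → V := fun z => z.2 + z.1.1 • u (z.2, z.1.2.2) - z.1.2.1
  have hG : AnalyticAt ℂ G (p, P) := by
    have hq : AnalyticAt ℂ (fun z : (ℂ × V × W) × V => z.1.2) (p, P) :=
      analyticAt_snd.comp analyticAt_fst
    have hmom := AnalyticAt.fun_comp (f := fun z : (ℂ × V × W) × V => (z.2, z.1.2.2))
      (hu _ hsol.1) (analyticAt_snd.prod (analyticAt_snd.comp hq))
    exact (analyticAt_snd.add ((analyticAt_fst.comp analyticAt_fst).smul hmom)).sub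
      (analyticAt_fst.comp hq)
  have hinv : (fderiv ℂ G (p, P) ∘L .inr ℂ (ℂ × V × W) V).IsInvertible := by
    obtain ⟨h, hh, hD⟩ := hp
    have hnorm := norm_fderiv_smul_slice_le hu hε (lt_of_le_of_lt (by positivity) hh) hh.le hD
      ((hsol.norm_sub_le hε).trans hh.le)
    have hder : fderiv ℂ G (p, P) ∘L .inr ℂ (ℂ × V × W) V = _ :=
      (hG.differentiableAt.hasFDerivAt.comp P (hasFDerivAt_prodMk_right p P)).unique
        (((hasFDerivAt_id P).add
          (differentiableAt_smul_slice_fst (μ := p.1) hu hsol.1).hasFDerivAt).sub_const p.2.1)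
    exact hder ▸ isInvertible_id_add (hnorm.trans_lt one_half_lt_one)
  have hGω : ContDiffAt ℂ ω G (p, P) := hG.contDiffAt
  have hg := hGω.contDiffAt_implicitFunction (by simp) hinv
  have hgp := hGω.implicitFunction_apply_self (by simp) hinv
  have hgsol := hGω.eventually_apply_implicitFunction (by simp) hinv
  set g := hGω.implicitFunction (by simp) hinv
  refine hg.analyticAt.congr ?_
  have hmem : ∀ᶠ z in 𝓝 p, (g z, z.2.2) ∈ D := by
    have hcont : ContinuousAt (fun z => (g z, z.2.2)) p := by
      have := hg.continuousAt
      fun_prop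
    refine hcont.tendsto.eventually_mem ?_
    rw [hgp]
    exact hsol.mem_nhds hε hp
  filter_upwards [hmem, hgsol, (isOpen_paramRoom D ε).mem_nhds hp] with z hzD hz hzp
  refine IsImplicitSolution.unique hu hε hzp ⟨hzD, ?_⟩
    (isImplicitSolution_implicitSolution hu h0 hε hzp)
  have hGp : G (p, P) = 0 := sub_eq_zero.2 hsol.2.symm
  exact (sub_eq_zero.1 (hz.trans hGp)).symm

end ImplicitEquation

section GeneratingFunctions

variable {d : ℕ}

/-- The bilinear form `p · q'` on phase space, so that `y ↦ liouvilleForm d y` is the Liouville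
one-form `p · dq`. -/
noncomputable def liouvilleForm (d : ℕ) : CPhase d →L[ℂ] CPhase d →L[ℂ] ℂ :=
  ∑ i, (ContinuousLinearMap.proj i ∘L .fst ℂ (Fin d → ℂ) (Fin d → ℂ)).smulRight
    (ContinuousLinearMap.proj i ∘L .snd ℂ (Fin d → ℂ) (Fin d → ℂ))

theorem liouvilleForm_apply (a b : CPhase d) : liouvilleForm d a b = ∑ i, a.1 i * b.2 i := by
  simp [liouvilleForm]

theorem liouvilleForm_congr {a a' b b' : CPhase d} (ha : a.1 = a'.1) (hb : b.2 = b'.2) :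
    liouvilleForm d a b = liouvilleForm d a' b' := by
  simp only [liouvilleForm_apply, ha, hb]

variable {S : CPhase d → ℂ} {x : CPhase d}

theorem fderiv_apply_eq_liouvilleForm (S : CPhase d → ℂ) (x v : CPhase d) :
    fderiv ℂ S x v = liouvilleForm d v (hamVF d S x) - liouvilleForm d (hamVF d S x) v := by
  have hv : v = ∑ i, v.1 i • ((Pi.single i 1, 0) : CPhase d) +
      ∑ i, v.2 i • ((0, Pi.single i 1) : CPhase d) := by
    ext j <;> simp [Prod.fst_sum, Prod.snd_sum, Finset.sum_apply, Pi.single_apply]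
  conv_lhs => rw [hv]
  simp only [map_add, map_sum, map_smul, smul_eq_mul, liouvilleForm_apply, hamVF, pGrad, qGrad,
    Pi.neg_apply, neg_mul, Finset.sum_neg_distrib, sub_neg_eq_add, mul_comm (v.2 _)]

theorem hamVF_eq_of_fderiv_eq {v : CPhase d}
    (h : fderiv ℂ S x = (liouvilleForm d).flip v - liouvilleForm d v) : hamVF d S x = v := by
  ext i <;> simp [hamVF, pGrad, qGrad, h, liouvilleForm_apply, Pi.single_apply]

theorem analyticAt_pGrad (hS : AnalyticAt ℂ S x) : AnalyticAt ℂ (pGrad d S) x :=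
  AnalyticAt.pi fun i =>
    ((ContinuousLinearMap.apply ℂ ℂ ((Pi.single i 1, 0) : CPhase d)).analyticAt _).comp hS.fderiv

theorem analyticAt_qGrad (hS : AnalyticAt ℂ S x) : AnalyticAt ℂ (qGrad d S) x :=
  AnalyticAt.pi fun i =>
    ((ContinuousLinearMap.apply ℂ ℂ ((0, Pi.single i 1) : CPhase d)).analyticAt _).comp hS.fderiv

theorem analyticAt_hamVF (hS : AnalyticAt ℂ S x) : AnalyticAt ℂ (hamVF d S) x :=
  (analyticAt_qGrad hS).neg.prod (analyticAt_pGrad hS)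

/-- The function `S` is analytic on `D` with gradient at most `ε`, so that `P · q + μ S(P, q)`
generates a symplectic map which is `|μ| ε`-close to the identity. -/
structure SmallGenerator (S : CPhase d → ℂ) (D : Set (CPhase d)) (ε : ℝ) : Prop where
  pos : 0 < ε
  analyticOnNhd : AnalyticOnNhd ℂ S D
  norm_hamVF_le : ∀ x ∈ D, ‖hamVF d S x‖ ≤ ε

/-- The point `(P, q)` of mixed old and new coordinates at which the symplectic map generated by
`P · q + μ S(P, q)` evaluates the gradient of `S`. -/
noncomputable def mixedPoint (S : CPhase d → ℂ) (D : Set (CPhase d)) (p : ℂ × CPhase d) :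
    CPhase d :=
  (implicitSolution (qGrad d S) D p, p.2.2)

/-- The family of symplectic maps generated by the functions `P · q + μ S(P, q)`. -/
noncomputable def generatedFamily (S : CPhase d → ℂ) (D : Set (CPhase d)) (p : ℂ × CPhase d) :
    CPhase d :=
  p.2 + p.1 • hamVF d S (mixedPoint S D p)

/-- The action `μ (P · ∂_P S - S)(P, q)`, a primitive of `P · dQ - p · dq` for the map
`(p, q) ↦ (P, Q)` generated by `P · q + μ S(P, q)`. -/
noncomputable def generatedAction (S : CPhase d → ℂ) (D : Set (CPhase d)) (p : ℂ × CPhase d) : ℂ :=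
  p.1 * (liouvilleForm d (mixedPoint S D p) (hamVF d S (mixedPoint S D p)) -
    S (mixedPoint S D p))

namespace SmallGenerator

variable {D : Set (CPhase d)} {ε : ℝ} {p : ℂ × CPhase d} (hS : SmallGenerator S D ε)
include hS

theorem analyticOnNhd_qGrad : AnalyticOnNhd ℂ (qGrad d S) D := fun y hy =>
  analyticAt_qGrad (hS.analyticOnNhd y hy)

theorem norm_qGrad_le : ∀ y ∈ D, ‖qGrad d S y‖ ≤ ε := fun y hy => by
  simpa [hamVF] using (norm_fst_le _).trans (hS.norm_hamVF_le y hy)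

theorem isImplicitSolution (hp : p ∈ paramRoom D ε) :
    IsImplicitSolution (qGrad d S) D p (mixedPoint S D p).1 :=
  isImplicitSolution_implicitSolution hS.analyticOnNhd_qGrad hS.pos.le hS.norm_qGrad_le hp

theorem mixedPoint_mem (hp : p ∈ paramRoom D ε) : mixedPoint S D p ∈ D :=
  (hS.isImplicitSolution hp).1

theorem fst_eq (hp : p ∈ paramRoom D ε) :
    p.2.1 = (mixedPoint S D p).1 + p.1 • qGrad d S (mixedPoint S D p) :=
  (hS.isImplicitSolution hp).2

theorem generatedFamily_fst (hp : p ∈ paramRoom D ε) :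
    (generatedFamily S D p).1 = (mixedPoint S D p).1 := by
  simp [generatedFamily, hamVF, hS.fst_eq hp]

theorem mixedPoint_eq (hp : p ∈ paramRoom D ε) {P : Fin d → ℂ}
    (hP : IsImplicitSolution (qGrad d S) D p P) : mixedPoint S D p = (P, p.2.2) :=
  Prod.ext ((hS.isImplicitSolution hp).unique hS.analyticOnNhd_qGrad hS.norm_qGrad_le hp hP) rfl

theorem analyticAt_mixedPoint (hp : p ∈ paramRoom D ε) : AnalyticAt ℂ (mixedPoint S D) p :=
  (analyticAt_implicitSolution hS.analyticOnNhd_qGrad hS.pos.le hS.norm_qGrad_le hp).prod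
    (analyticAt_snd.comp analyticAt_snd)

theorem analyticAt_hamVF_mixedPoint (hp : p ∈ paramRoom D ε) :
    AnalyticAt ℂ (fun p => hamVF d S (mixedPoint S D p)) p :=
  AnalyticAt.fun_comp (analyticAt_hamVF (hS.analyticOnNhd _ (hS.mixedPoint_mem hp)))
    (hS.analyticAt_mixedPoint hp)

theorem uniformlyNearIdentity : UniformlyNearIdentity (generatedFamily S D) D ε where
  pos := hS.pos
  analyticAt p hp := analyticAt_snd.add (analyticAt_fst.smul (hS.analyticAt_hamVF_mixedPoint hp))
  norm_sub_le p hp := by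
    rw [generatedFamily, add_sub_cancel_left, norm_smul]
    gcongr
    exact hS.norm_hamVF_le _ (hS.mixedPoint_mem hp)

theorem generatedFamily_one_eq {x y : CPhase d} (hx : (1, x) ∈ paramRoom D ε)
    (hmem : (y.1, x.2) ∈ D) (h₁ : x.1 = y.1 + qGrad d S (y.1, x.2))
    (h₂ : y.2 = x.2 + pGrad d S (y.1, x.2)) : generatedFamily S D (1, x) = y := by
  rw [generatedFamily, hS.mixedPoint_eq hx ⟨hmem, by simpa using h₁⟩]
  ext1
  · simp [hamVF, h₁]
  · simp [hamVF, h₂]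

theorem deriv_generatedFamily (hx : (0, x) ∈ paramRoom D ε) :
    deriv (fun μ => generatedFamily S D (μ, x)) 0 = hamVF d S x := by
  have hfield : HasDerivAt (fun μ : ℂ => hamVF d S (mixedPoint S D (μ, x))) _ 0 :=
    (AnalyticAt.fun_comp (f := fun μ : ℂ => (μ, x)) (hS.analyticAt_hamVF_mixedPoint hx)
      (analyticAt_id.prod analyticAt_const)).differentiableAt.hasDerivAt
  have hzero : mixedPoint S D (0, x) = x :=
    Prod.ext (by simpa using (hS.fst_eq hx).symm) rfl
  have hder : HasDerivAt (fun μ => generatedFamily S D (μ, x)) _ 0 :=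
    ((hasDerivAt_id (0 : ℂ)).fun_smul hfield).const_add x
  simpa [hzero] using hder.deriv

theorem liouvilleForm_snd_apply (hp : p ∈ paramRoom D ε) (v : CPhase d) :
    liouvilleForm d p.2 v = liouvilleForm d (mixedPoint S D p) v -
      p.1 * liouvilleForm d (hamVF d S (mixedPoint S D p)) v := by
  rw [← smul_eq_mul, ← _root_.smul_apply, ← map_smul, ← _root_.sub_apply, ← map_sub]
  exact liouvilleForm_congr (by simp [hS.fst_eq hp, hamVF]) rfl

theorem pullback_sub_liouvilleForm (hp : p ∈ paramRoom D ε) :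
    liouvilleForm d (generatedFamily S D p) ∘L fderiv ℂ (fun y => generatedFamily S D (p.1, y)) p.2
        - liouvilleForm d p.2 = fderiv ℂ (fun y => generatedAction S D (p.1, y)) p.2 := by
  have hz : HasFDerivAt (fun y => mixedPoint S D (p.1, y)) _ p.2 :=
    (AnalyticAt.fun_comp (f := fun y => (p.1, y)) (hS.analyticAt_mixedPoint hp)
      (analyticAt_const.prod analyticAt_id)).differentiableAt.hasFDerivAt
  set z' := fderiv ℂ (fun y => mixedPoint S D (p.1, y)) p.2
  have hz'2 : ∀ v, (z' v).2 = v.2 := fun v =>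
    congrArg (· v) ((hasFDerivAt_snd.comp p.2 hz).unique hasFDerivAt_snd)
  have hSz := hS.analyticOnNhd _ (hS.mixedPoint_mem hp)
  have hX : HasFDerivAt (fun y => hamVF d S (mixedPoint S D (p.1, y))) _ p.2 :=
    (analyticAt_hamVF hSz).differentiableAt.hasFDerivAt.comp (x := p.2)
      (f := fun y => mixedPoint S D (p.1, y)) hz
  have hF : HasFDerivAt (fun y => generatedFamily S D (p.1, y)) _ p.2 :=
    (hasFDerivAt_id p.2).add (hX.const_smul p.1)
  have hA : HasFDerivAt (fun y => generatedAction S D (p.1, y)) _ p.2 :=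
    (((liouvilleForm d).hasFDerivAt_of_bilinear hz hX).sub
      (hSz.differentiableAt.hasFDerivAt.comp (x := p.2)
        (f := fun y => mixedPoint S D (p.1, y)) hz)).const_mul p.1
  rw [hF.fderiv, hA.fderiv]
  refine ContinuousLinearMap.ext fun v => ?_
  set z := mixedPoint S D p
  set W := fderiv ℂ (hamVF d S) z (z' v)
  change liouvilleForm d (generatedFamily S D p) (v + p.1 • W) - liouvilleForm d p.2 v =
    p.1 * (liouvilleForm d z W + liouvilleForm d (z' v) (hamVF d S z) - fderiv ℂ S z (z' v))
  have hXv : liouvilleForm d (hamVF d S z) (z' v) = liouvilleForm d (hamVF d S z) v :=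
    liouvilleForm_congr rfl (hz'2 v)
  rw [fderiv_apply_eq_liouvilleForm, hXv, hS.liouvilleForm_snd_apply hp,
    liouvilleForm_congr (hS.generatedFamily_fst hp) rfl, map_add, map_smul, smul_eq_mul]
  ring

theorem exactSymplecticFamily {r : ℝ} (hr : 0 < r) (hx : Metric.closedBall x r ⊆ D) :
    ExactSymplecticFamily (liouvilleForm d) (generatedFamily S D) (generatedAction S D) x := by
  have hroom : ((0 : ℂ), x) ∈ paramRoom D ε := zero_mem_paramRoom hr hx
  have hpoint := hS.analyticAt_mixedPoint hroom
  have haction : AnalyticAt ℂ (generatedAction S D) (0, x) :=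
    analyticAt_fst.mul (((liouvilleForm d).analyticAt_bilinear _).comp
      (hpoint.prod (hS.analyticAt_hamVF_mixedPoint hroom)) |>.sub
      (AnalyticAt.fun_comp (hS.analyticOnNhd _ (hS.mixedPoint_mem hroom)) hpoint))
  exact {
    toNearIdentityFamily := hS.uniformlyNearIdentity.nearIdentityFamily hr hx
    analyticAt_action := haction
    isBigO_action := isBigO_fst_of_eventually_eq_zero haction
      (Eventually.of_forall fun y => by simp [generatedAction])
    pullback_sub := by
      filter_upwards [(isOpen_paramRoom D ε).mem_nhds hroom] with p hp
      exact hS.pullback_sub_liouvilleForm hp }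

end SmallGenerator

end GeneratingFunctions

section Flows

open scoped NNReal

variable {E : Type*} [NormedAddCommGroup E] [NormedSpace ℝ E] {v : E → E} {x : E}
  {a L : ℝ} {K : ℝ≥0}

/- As long as the curve stays in the ball, its speed is less than `a`. -/
theorem norm_sub_le_of_hasDerivAt {γ : ℝ → E} (hLa : L < a) (ha : 0 < a)
    (hv : ∀ y ∈ Metric.closedBall x a, ‖v y‖ ≤ L) (h0 : γ 0 = x)
    (hγ : ∀ t ∈ Set.Icc (0 : ℝ) 1, HasDerivAt γ (v (γ t)) t) {t : ℝ} (ht : t ∈ Set.Icc (0 : ℝ) 1) :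
    ‖γ t - x‖ ≤ a * t := by
  have hbound := image_norm_le_of_norm_deriv_right_lt_deriv_boundary (f := fun t => γ t - x)
    (f' := fun t => v (γ t)) (a := 0) (b := 1) (B := fun t => a * t) (B' := fun _ => a)
    (fun t ht => ((hγ t ht).sub_const x).continuousAt.continuousWithinAt)
    (fun t ht => ((hγ t (Set.Ico_subset_Icc_self ht)).sub_const x).hasDerivWithinAt)
    (by simp [h0]) (fun t => by simpa using (hasDerivAt_id t).const_mul a) ?_
  · exact hbound ht
  · intro t ht hta
    refine (hv _ (mem_closedBall_iff_norm.2 (hta.trans_le ?_))).trans_lt hLa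
    exact mul_le_of_le_one_right ha.le ht.2.le

theorem exists_hasDerivAt_of_lipschitzOnWith [CompleteSpace E] (hLa : L < a) (ha : 0 < a)
    (hv : ∀ y ∈ Metric.closedBall x a, ‖v y‖ ≤ L)
    (hl : LipschitzOnWith K v (Metric.closedBall x a)) :
    ∃ γ : ℝ → E, γ 0 = x ∧
      ∀ t ∈ Set.Icc (0 : ℝ) 1, γ t ∈ Metric.closedBall x a ∧ HasDerivAt γ (v (γ t)) t := by
  obtain ⟨L', hL', hLa'⟩ := exists_between (max_lt hLa ha)
  obtain ⟨hLL', h0L'⟩ := max_lt_iff.1 hL'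
  have hT : 1 < a / L' := (one_lt_div h0L').2 hLa'
  lift a to ℝ≥0 using ha.le
  lift L' to ℝ≥0 using h0L'.le
  have hpl : IsPicardLindelof (fun _ => v)
      (⟨0, by linarith, by linarith⟩ : Set.Icc (-(a / L' : ℝ)) (a / L')) x a 0 L' K := by
    refine IsPicardLindelof.of_time_independent (fun y hy => (hv y hy).trans hLL'.le) hl ?_
    simp only [sub_zero, zero_sub, neg_neg, max_self, NNReal.coe_zero]
    rw [mul_div_cancel₀ _ h0L'.ne']
  obtain ⟨γ, hγ0, hγ⟩ := hpl.exists_eq_forall_mem_Icc_hasDerivWithinAt₀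
  have hderiv : ∀ t ∈ Set.Icc (0 : ℝ) 1, HasDerivAt γ (v (γ t)) t := fun t ht =>
    (hγ t ⟨by linarith [ht.1], by linarith [ht.2]⟩).hasDerivAt
      (Icc_mem_nhds (by linarith [ht.1]) (by linarith [ht.2]))
  refine ⟨γ, hγ0, fun t ht => ⟨mem_closedBall_iff_norm.2 ?_, hderiv t ht⟩⟩
  exact (norm_sub_le_of_hasDerivAt hLa ha hv hγ0 hderiv ht).trans
    (mul_le_of_le_one_right ha.le ht.2)

theorem norm_sub_le_gronwallBound {s : Set E} {γ η η' : ℝ → E} {c : ℝ}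
    (hl : LipschitzOnWith K v s)
    (hγ : ∀ t ∈ Set.Icc (0 : ℝ) 1, γ t ∈ s ∧ HasDerivAt γ (v (γ t)) t)
    (hη : ∀ t ∈ Set.Icc (0 : ℝ) 1, η t ∈ s ∧ HasDerivAt η (η' t) t ∧ ‖η' t - v (η t)‖ ≤ c)
    (h0 : γ 0 = η 0) : ‖γ 1 - η 1‖ ≤ gronwallBound 0 K c 1 := by
  have hsub : Set.Ico (0 : ℝ) 1 ⊆ Set.Icc 0 1 := Set.Ico_subset_Icc_self
  have hdist := dist_le_of_approx_trajectories_ODE_of_mem (v := fun _ => v) (s := fun _ => s)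
    (εf := 0) (εg := c) (δ := 0) (fun _ _ => hl)
    (fun t ht => (hγ t ht).2.continuousAt.continuousWithinAt)
    (fun t ht => (hγ t (hsub ht)).2.hasDerivWithinAt) (fun _ _ => (dist_self _).le)
    (fun t ht => (hγ t (hsub ht)).1)
    (fun t ht => (hη t ht).2.1.continuousAt.continuousWithinAt)
    (fun t ht => (hη t (hsub ht)).2.1.hasDerivWithinAt)
    (fun t ht => (dist_eq_norm _ _).trans_le (hη t (hsub ht)).2.2)
    (fun t ht => (hη t (hsub ht)).1) (by rw [h0, dist_self]) 1 (Set.right_mem_Icc.2 zero_le_one)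
  rwa [zero_add, sub_zero, dist_eq_norm] at hdist

end Flows

section EmbeddingFlows

variable {E : Type*} [NormedAddCommGroup E] [NormedSpace ℂ E]
  {F : ℂ × E → E} {D : Set E} {ε : ℝ} {m : ℕ} {x : E}

theorem gronwallBound_third_le {c : ℝ} (hc : 0 ≤ c) : gronwallBound 0 (1 / 3) c 1 ≤ 5 / 4 * c := by
  have hexp : Real.exp (1 / 3) ≤ 17 / 12 := by
    refine le_of_pow_le_pow_left₀ three_ne_zero (by norm_num) ?_
    rw [← Real.exp_nat_mul]
    norm_num
    linarith [Real.exp_one_lt_d9]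
  rw [gronwallBound_of_K_ne_0 (by norm_num)]
  simp only [zero_mul, zero_add, mul_one]
  nlinarith

theorem sum_cauchyTails_le_exp (hε : 0 ≤ ε) (hm : 1 ≤ m) :
    4 * (2 * Real.exp 1 * ε) / (2 * Real.exp 1) ^ (m + 1) / (1 - 1 / (2 * Real.exp 1)) +
      2 * (2 * Real.exp 1 * ε) / (2 * Real.exp 1) ^ (m + 1) / (1 - 1 / (2 * Real.exp 1)) ≤
      4 * (ε * Real.exp (-m)) := by
  have h2 : (2 : ℝ) ^ 1 ≤ 2 ^ m := pow_le_pow_right₀ one_le_two hm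
  have h3 : (3 / 4 : ℝ) ≤ 1 - 1 / (2 * Real.exp 1) := by
    rw [le_sub_comm, div_le_iff₀ (by positivity)]
    linarith [Real.exp_one_gt_two]
  rw [Real.exp_neg, ← Real.exp_one_pow, pow_succ, mul_pow]
  calc _ = 6 * (ε * (Real.exp 1 ^ m)⁻¹) * (2 ^ m)⁻¹ * (1 - 1 / (2 * Real.exp 1))⁻¹ := by
        field_simp; norm_num
    _ ≤ 6 * (ε * (Real.exp 1 ^ m)⁻¹) * (2 ^ 1)⁻¹ * (3 / 4)⁻¹ := by gcongr
    _ = 4 * (ε * (Real.exp 1 ^ m)⁻¹) := by ring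

theorem hasDerivAt_newtonCurve_ofReal (m : ℕ) (b : ℕ → E) (t : ℝ) :
    HasDerivAt (fun t : ℝ => newtonCurve m b t) (deriv (newtonCurve m b) t) t := by
  have h := (hasDerivAt_newtonCurve m b t).differentiableAt.hasDerivAt
  simpa [Function.comp_def] using h.scomp t Complex.ofRealCLM.hasDerivAt

namespace UniformlyNearIdentity

variable [CompleteSpace E] (hF : UniformlyNearIdentity F D ε)
include hF

theorem norm_interpField_sub_truncField_le_exp
    (hr : Metric.closedBall x ((3 * m + 1) * (Real.exp 1 * ε)) ⊆ D) :
    ‖interpField F m (1, x) - truncField F m x‖ ≤ 4 * (ε * Real.exp (-m)) := by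
  have hε := hF.pos
  have he : (1 / 2 : ℝ) ≤ 1 - 1 / Real.exp 1 := by
    rw [le_sub_comm, div_le_iff₀ (by positivity)]
    linarith [Real.exp_one_gt_two]
  refine (hF.norm_interpField_sub_truncField_le (Real.one_lt_exp_iff.2 one_pos) hr).trans ?_
  rw [Real.exp_neg, ← Real.exp_one_pow, pow_succ]
  calc _ = 2 * (ε * (Real.exp 1 ^ m)⁻¹) * (1 - 1 / Real.exp 1)⁻¹ := by field_simp
    _ ≤ 2 * (ε * (Real.exp 1 ^ m)⁻¹) * (1 / 2)⁻¹ := by gcongr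
    _ = 4 * (ε * (Real.exp 1 ^ m)⁻¹) := by ring

theorem lipschitzOnWith_truncField
    (hr : Metric.closedBall x ((3 * m + 1) * (2 * ε) + 20 * ε) ⊆ D) :
    LipschitzOnWith (1 / 3) (truncField F m) (Metric.closedBall x (8 * ε)) := by
  have hε := hF.pos
  have hroom : ∀ w, ‖w - x‖ ≤ 8 * ε + 12 * ε → Metric.closedBall w ((3 * m + 1) * (2 * ε)) ⊆ D :=
    fun w hw => closedBall_subset_of_norm_sub_le hr (by linarith)
  refine LipschitzOnWith.of_dist_le_mul fun a ha b hb => ?_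
  rw [mem_closedBall_iff_norm] at ha hb
  rw [dist_eq_norm, dist_eq_norm]
  convert norm_sub_le_of_norm_le (M := 4 * ε) (ρ := 12 * ε) (by positivity)
    (fun w hw => ((hF.nearIdentityFamily (by positivity)
      (hroom w hw)).analyticAt_truncField m).differentiableAt)
    (fun w hw => hF.norm_truncField_le (hroom w hw)) hb ha using 2
  push_cast
  field

theorem norm_deriv_newtonCurve_sub_truncField_le (hm : 1 ≤ m)
    (hr : Metric.closedBall x (6 * Real.exp 1 * ε * (m + 1)) ⊆ D) {t : ℝ}
    (ht : t ∈ Set.Icc (0 : ℝ) 1) :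
    ‖deriv (newtonCurve m (familyOrbit F Prod.snd (1, x))) t -
        truncField F m (newtonCurve m (familyOrbit F Prod.snd (1, x)) t)‖ ≤
      4 * (ε * Real.exp (-m)) := by
  have hε := hF.pos
  have he := Real.exp_one_gt_two
  have hmε : 0 ≤ m * ε := by positivity
  have hsmall : Metric.closedBall x ((3 * m + 1) * ε) ⊆ D :=
    closedBall_subset_of_norm_sub_le hr (by rw [sub_self, norm_zero]; nlinarith)
  have hcurve := hF.norm_newtonCurve_sub_le (p := (1, x)) hε (by simp) hsmall ht
  rw [norm_one, one_mul] at hcurve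
  refine (norm_sub_le_norm_sub_add_norm_sub _
    (interpField F m (1, newtonCurve m (familyOrbit F Prod.snd (1, x)) t)) _).trans <|
    (add_le_add ?_ ?_).trans (sum_cauchyTails_le_exp hε.le hm)
  · refine hF.norm_deriv_newtonCurve_sub_interpField_le (by linarith) ?_ ht
    convert hr using 2
    ring
  · exact hF.norm_interpField_sub_truncField_le (by linarith)
      (closedBall_subset_of_norm_sub_le hr (by nlinarith))

theorem exists_hasDerivAt_truncField (hm : 1 ≤ m)
    (hr : Metric.closedBall x (6 * Real.exp 1 * ε * (m + 1)) ⊆ D) :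
    ∃ γ : ℝ → E, γ 0 = x ∧ (∀ t ∈ Set.Icc (0 : ℝ) 1, γ t ∈ Metric.closedBall x (8 * ε) ∧
      HasDerivAt γ (truncField F m (γ t)) t) ∧ ‖γ 1 - F (1, x)‖ ≤ 5 * (ε * Real.exp (-m)) := by
  have hε := hF.pos
  have he := Real.exp_one_gt_d9
  have hmε : 1 * ε ≤ m * ε := by gcongr; exact_mod_cast hm
  have hroom : (3 * m + 1) * (2 * ε) + 20 * ε ≤ 6 * Real.exp 1 * ε * (m + 1) := by nlinarith
  have hroom' : (3 * m + 1) * ε ≤ 6 * Real.exp 1 * ε * (m + 1) := by nlinarith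
  have hlip := hF.lipschitzOnWith_truncField ((Metric.closedBall_subset_closedBall hroom).trans hr)
  have hbound : ∀ y ∈ Metric.closedBall x (8 * ε), ‖truncField F m y‖ ≤ 4 * ε := fun y hy =>
    hF.norm_truncField_le (closedBall_subset_of_norm_sub_le hr
      (by linarith [mem_closedBall_iff_norm.1 hy]))
  obtain ⟨γ, hγ0, hγ⟩ := exists_hasDerivAt_of_lipschitzOnWith (by linarith) (by positivity)
    hbound hlip
  set b := familyOrbit F Prod.snd (1, x) with hb
  refine ⟨γ, hγ0, hγ, ?_⟩
  have hb1 : newtonCurve m b ((1 : ℝ) : ℂ) = F (1, x) := by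
    simpa [hb, familyOrbit_snd_succ F _ 0, familyOrbit_zero] using newtonCurve_natCast hm b
  rw [← hb1]
  refine (norm_sub_le_gronwallBound (η := fun t => newtonCurve m b t) hlip hγ
    (fun t ht => ⟨?_, hasDerivAt_newtonCurve_ofReal m b t,
      hF.norm_deriv_newtonCurve_sub_truncField_le hm hr ht⟩) ?_).trans ?_
  · have hcurve := hF.norm_newtonCurve_sub_le (p := (1, x)) hε (by simp)
      ((Metric.closedBall_subset_closedBall hroom').trans hr) ht
    rw [norm_one, one_mul] at hcurve
    exact mem_closedBall_iff_norm.2 (hcurve.trans (by linarith))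
  · rw [hγ0, Complex.ofReal_zero, newtonCurve_zero, hb, familyOrbit_zero]
  · exact (gronwallBound_third_le (by positivity)).trans_eq (by ring)

end UniformlyNearIdentity

end EmbeddingFlows

section Thickenings

variable {α : Type*} [PseudoMetricSpace α] {s : Set α} {a b c : ℝ} {x y : α}

theorem closedBall_subset_of_mem_cthickening (hx : x ∈ Metric.cthickening a s) (ha : 0 ≤ a)
    (hb : 0 ≤ b) (hc : a + b ≤ c) : Metric.closedBall x b ⊆ Metric.cthickening c s :=
  (Metric.closedBall_subset_cthickening hx b).trans <|
    (Metric.cthickening_cthickening_subset hb ha s).trans <|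
      Metric.cthickening_mono (by rwa [add_comm]) s

theorem iterate_mem_cthickening {f : α → α} {k n : ℕ} (hx : x ∈ Metric.cthickening a s)
    (ha : 0 ≤ a) (hb : 0 ≤ b) (hf : ∀ y ∈ Metric.cthickening (a + k * b) s, dist (f y) y ≤ b)
    (hn : n ≤ k) : f^[n] x ∈ Metric.cthickening (a + n * b) s := by
  induction n with
  | zero => simpa using hx
  | succ n ih =>
    have hnk : (n : ℝ) ≤ k := by exact_mod_cast n.le_succ.trans hn
    have hmem := ih (n.le_succ.trans hn)
    rw [Function.iterate_succ_apply']
    exact closedBall_subset_of_mem_cthickening hmem (by positivity) hb (by push_cast; linarith)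
      (Metric.mem_closedBall.2 (hf _ (Metric.cthickening_mono (by gcongr) s hmem)))

end Thickenings

section InterpolatingFields

theorem fwdDiff_iter_familyOrbit_eq_finDiff {E : Type*} [NormedAddCommGroup E] {F : ℂ × E → E}
    {f : E → E} {k : ℕ} {x : E} (h : ∀ n < k, F (1, f^[n] x) = f (f^[n] x)) :
    (fwdDiff 1)^[k] (familyOrbit F Prod.snd (1, x)) 0 = finDiff f k x := by
  induction k generalizing x with
  | zero => rfl
  | succ k ih =>
    have hstep : familyStep F (1, x) = (1, f x) := Prod.ext rfl (h 0 k.succ_pos)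
    rw [fwdDiff_iter_succ_familyOrbit, hstep, ih fun n hn => h n (hn.trans k.lt_succ_self),
      ih fun n hn => h (n + 1) (Nat.succ_lt_succ hn), finDiff]

theorem interpVF_eq_interpField {d m : ℕ} {F : ℂ × CPhase d → CPhase d} {f : CPhase d → CPhase d}
    {x : CPhase d} (h : ∀ n < m, F (1, f^[n] x) = f (f^[n] x)) :
    interpVF d f m x = interpField F m (1, x) :=
  Finset.sum_congr rfl fun _ hk => by
    rw [fwdDiff_iter_familyOrbit_eq_finDiff fun n hn =>
      h n (hn.trans_le (Finset.mem_Icc.1 hk).2)]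

end InterpolatingFields

section Embedding

variable {d m : ℕ} {δ ε : ℝ} {S : CPhase d → ℂ} {D : Set (CPhase d)} {x : CPhase d}

/-- The Hamiltonian `H_m` of the embedding field of order `m` of the map generated by
`P · q + S(P, q)`. -/
noncomputable def embeddingHam (S : CPhase d → ℂ) (D : Set (CPhase d)) (m : ℕ) :
    CPhase d → ℂ :=
  truncHam (liouvilleForm d) (generatedFamily S D) (generatedAction S D) m

theorem smallGenerator_of_max_norm_le (hε : 0 < ε) (hS : AnalyticOnNhd ℂ S D)
    (h : ∀ x ∈ D, max ‖pGrad d S x‖ ‖qGrad d S x‖ ≤ ε) : SmallGenerator S D ε :=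
  ⟨hε, hS, fun x hx => by simpa [hamVF, Prod.norm_def, and_comm] using h x hx⟩

theorem six_exp_one_mul_le_of_eq_floor (hd : 1 ≤ d) (hε : 0 < ε)
    (hm : (m : ℤ) = ⌊δ / (6 * Real.exp 1 * ε) - d⌋) : 6 * Real.exp 1 * ε * (m + 1) ≤ δ := by
  have hle : (m : ℝ) ≤ δ / (6 * Real.exp 1 * ε) - d := by
    exact_mod_cast Int.le_floor.1 hm.le
  have hd' : (1 : ℝ) ≤ d := by exact_mod_cast hd
  rw [← le_div_iff₀' (by positivity)]
  linarith

theorem mul_exp_neg_le_of_eq_floor {c : ℝ} (hc : 0 ≤ c) (hε : 0 < ε)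
    (hm : (m : ℤ) = ⌊δ / (6 * Real.exp 1 * ε) - d⌋) : c * (ε * Real.exp (-m)) ≤
      c * Real.exp (d + 1) * ε * Real.exp (-δ / (6 * Real.exp 1 * ε)) := by
  have hlt : δ / (6 * Real.exp 1 * ε) - d < m + 1 := by
    exact_mod_cast Int.floor_lt.1 (hm.symm.le.trans_lt (Int.lt_succ _))
  calc c * (ε * Real.exp (-m))
      ≤ c * (ε * Real.exp (d + 1 + -δ / (6 * Real.exp 1 * ε))) := by
        gcongr
        rw [neg_div]
        linarith
    _ = _ := by rw [Real.exp_add]; ring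

theorem pos_of_six_exp_one_mul_le (hε : 0 < ε) (hm : 6 * Real.exp 1 * ε * (m + 1) ≤ δ) : 0 < δ :=
  lt_of_lt_of_le (by positivity) hm

theorem sixteen_mul_le_of_six_exp_one_mul_le (hε : 0 < ε) (hm : 6 * Real.exp 1 * ε * (m + 1) ≤ δ) :
    16 * ε * (m + 1) ≤ δ := by
  refine le_trans ?_ hm
  gcongr
  linarith [Real.exp_one_gt_d9]

namespace SmallGenerator

section

variable (hS : SmallGenerator S D ε)
include hS

theorem analyticAt_embeddingHam (hδ : 0 < δ) (hx : Metric.closedBall x δ ⊆ D) :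
    AnalyticAt ℂ (embeddingHam S D m) x :=
  (hS.exactSymplecticFamily hδ hx).analyticAt_truncHam m

theorem hamVF_embeddingHam (hδ : 0 < δ) (hx : Metric.closedBall x δ ⊆ D) :
    hamVF d (embeddingHam S D m) x = truncField (generatedFamily S D) m x :=
  hamVF_eq_of_fderiv_eq ((hS.exactSymplecticFamily hδ hx).fderiv_truncHam m)

theorem norm_hamVF_embeddingHam_le (hm : 6 * Real.exp 1 * ε * (m + 1) ≤ δ)
    (hx : Metric.closedBall x (δ / 2) ⊆ D) : ‖hamVF d (embeddingHam S D m) x‖ ≤ 4 * ε := by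
  have hε := hS.pos
  have hroom := sixteen_mul_le_of_six_exp_one_mul_le hε hm
  rw [hS.hamVF_embeddingHam (half_pos (pos_of_six_exp_one_mul_le hS.pos hm)) hx]
  exact hS.uniformlyNearIdentity.norm_truncField_le
    ((Metric.closedBall_subset_closedBall (by nlinarith)).trans hx)

theorem norm_hamVF_embeddingHam_sub_hamVF_le (hm1 : 1 ≤ m)
    (hm : 6 * Real.exp 1 * ε * (m + 1) ≤ δ) (hx : Metric.closedBall x (δ / 2) ⊆ D) :
    ‖hamVF d (embeddingHam S D m) x - hamVF d S x‖ ≤ 80 * ε ^ 2 / δ := by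
  have hδ := half_pos (pos_of_six_exp_one_mul_le hS.pos hm)
  have hε := hS.pos
  have hroom := sixteen_mul_le_of_six_exp_one_mul_le hε hm
  rw [hS.hamVF_embeddingHam hδ hx, ← hS.deriv_generatedFamily (zero_mem_paramRoom hδ hx)]
  refine (hS.uniformlyNearIdentity.norm_truncField_sub_deriv_le hm1 hx
    (by nlinarith)).trans_eq ?_
  ring

theorem norm_hamVF_embeddingHam_sub_interpField_le (hm : 6 * Real.exp 1 * ε * (m + 1) ≤ δ)
    (hx : Metric.closedBall x (δ / 2) ⊆ D) :
    ‖hamVF d (embeddingHam S D m) x - interpField (generatedFamily S D) m (1, x)‖ ≤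
      4 * (ε * Real.exp (-m)) := by
  have heε : 0 < Real.exp 1 * ε := mul_pos (Real.exp_pos 1) hS.pos
  rw [hS.hamVF_embeddingHam (half_pos (pos_of_six_exp_one_mul_le hS.pos hm)) hx, norm_sub_rev]
  exact hS.uniformlyNearIdentity.norm_interpField_sub_truncField_le_exp
    ((Metric.closedBall_subset_closedBall (by nlinarith)).trans hx)

theorem exists_hasDerivAt_embeddingHam (hm1 : 1 ≤ m) (hm : 6 * Real.exp 1 * ε * (m + 1) ≤ δ)
    (hx : Metric.closedBall x δ ⊆ D) :
    ∃ γ : ℝ → CPhase d, γ 0 = x ∧ (∀ t ∈ Set.Icc (0 : ℝ) 1, γ t ∈ Metric.closedBall x (δ / 2) ∧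
      HasDerivAt γ (hamVF d (embeddingHam S D m) (γ t)) t) ∧
      ‖γ 1 - generatedFamily S D (1, x)‖ ≤ 5 * (ε * Real.exp (-m)) := by
  have hε := hS.pos
  have hδ := pos_of_six_exp_one_mul_le hS.pos hm
  have hroom := sixteen_mul_le_of_six_exp_one_mul_le hε hm
  obtain ⟨γ, hγ0, hγ, hγ1⟩ := hS.uniformlyNearIdentity.exists_hasDerivAt_truncField hm1
    ((Metric.closedBall_subset_closedBall hm).trans hx)
  refine ⟨γ, hγ0, fun t ht => ?_, hγ1⟩
  have hmem : γ t ∈ Metric.closedBall x (δ / 2) :=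
    Metric.closedBall_subset_closedBall (by nlinarith) (hγ t ht).1
  refine ⟨hmem, ?_⟩
  rw [hS.hamVF_embeddingHam (half_pos hδ) (closedBall_subset_of_norm_sub_le hx
    (by linarith [mem_closedBall_iff_norm.1 hmem]))]
  exact (hγ t ht).2

end

section Thickening

variable {D₀ : Set (CPhase d)} {f : CPhase d → CPhase d} {y : CPhase d}

theorem one_mem_paramRoom (hS : SmallGenerator S (Metric.cthickening δ D₀) ε)
    (hm : 6 * Real.exp 1 * ε * (m + 1) ≤ δ) (hy : y ∈ Metric.thickening (3 * δ / 4) D₀) :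
    (1, y) ∈ paramRoom (Metric.cthickening δ D₀) ε := by
  have hε := hS.pos
  have hδ := pos_of_six_exp_one_mul_le hS.pos hm
  have hroom := sixteen_mul_le_of_six_exp_one_mul_le hε hm
  have hmε : 0 ≤ ε * m := by positivity
  exact mem_paramRoom hε (by simp) <| closedBall_subset_of_mem_cthickening
    (Metric.thickening_subset_cthickening _ _ hy) (by positivity) (by positivity) (by linarith)

theorem interpVF_eq_interpField_generatedFamily
    (hS : SmallGenerator S (Metric.cthickening δ D₀) ε) (hm : 6 * Real.exp 1 * ε * (m + 1) ≤ δ)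
    (hf : ∀ y ∈ Metric.thickening (3 * δ / 4) D₀,
      generatedFamily S (Metric.cthickening δ D₀) (1, y) = f y)
    (hx : x ∈ Metric.cthickening (δ / 2) D₀) :
    interpVF d f m x = interpField (generatedFamily S (Metric.cthickening δ D₀)) m (1, x) := by
  have hε := hS.pos
  have hδ := pos_of_six_exp_one_mul_le hS.pos hm
  have hroom := sixteen_mul_le_of_six_exp_one_mul_le hε hm
  have hmem : ∀ n ≤ m, ∀ y ∈ Metric.cthickening (δ / 2 + n * ε) D₀,
      y ∈ Metric.thickening (3 * δ / 4) D₀ := fun n hn y hy => by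
    have hn : (n : ℝ) * ε ≤ m * ε := by gcongr
    exact Metric.cthickening_subset_thickening' (by positivity) (by linarith) D₀ hy
  refine interpVF_eq_interpField fun n hn => hf _ (hmem n hn.le _ ?_)
  refine iterate_mem_cthickening hx (half_pos hδ).le hε.le (fun y hy => ?_) hn.le
  have hnear := hS.uniformlyNearIdentity.norm_sub_le (1, y)
    (one_mem_paramRoom hS hm (hmem m le_rfl y hy))
  rwa [hf y (hmem m le_rfl y hy), norm_one, one_mul, ← dist_eq_norm] at hnear

end Thickening

end SmallGenerator

end Embedding

end HamiltonianEmbedding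

open HamiltonianEmbedding

/-- **Embedding theorem, Hamiltonian part.**
In the setting of the embedding theorem (`|∇S| ≤ ε` on `D`, `f` generated by
`P·q + S(P,q)`, `m = ⌊δ/(6eε) − d⌋ ≥ 1`), there is a Hamiltonian vector field
`X̂_m = J∇H_m` with `H_m` analytic on `D₁`, such that
`‖X̂_m − X_m‖_{D₁} ≤ 4 e^{d+1} ε exp(−δ/(6eε))`,
`‖Φ_{X̂_m} − f‖_{D₀} ≤ 5 e^{d+1} ε exp(−δ/(6eε))`, `‖X̂_m‖_{D₁} ≤ 4ε`, and
`‖X̂_m − J∇S‖_{D₁} ≤ 17(d+3)² ε²/δ`. -/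
theorem embedding_hamiltonian_vector_field (d : ℕ) (hd : 1 ≤ d)
    (D₀ : Set (CPhase d)) (δ ε : ℝ) (hδ : 0 < δ) (hε : 0 < ε)
    (D D₁ : Set (CPhase d))
    (hD : D = Metric.cthickening δ D₀)
    (hD₁ : D₁ = Metric.cthickening (δ / 2) D₀)
    (S : CPhase d → ℂ) (hS : AnalyticOnNhd ℂ S D)
    (hεub : ∀ x ∈ D, max ‖pGrad d S x‖ ‖qGrad d S x‖ ≤ ε)
    (f : CPhase d → CPhase d)
    (hfa : AnalyticOnNhd ℂ f (Metric.thickening (3 * δ / 4) D₀))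
    (hf : ∀ x ∈ Metric.thickening (3 * δ / 4) D₀,
      ((f x).1, x.2) ∈ D ∧
      x.1 = (f x).1 + qGrad d S ((f x).1, x.2) ∧
      (f x).2 = x.2 + pGrad d S ((f x).1, x.2))
    (m : ℕ) (hm : 1 ≤ m)
    (hmdef : (m : ℤ) = ⌊δ / (6 * Real.exp 1 * ε) - d⌋) :
    ∃ H : CPhase d → ℂ, AnalyticOnNhd ℂ H D₁ ∧
      (∀ x ∈ D₁, ‖hamVF d H x - interpVF d f m x‖ ≤
        4 * Real.exp ((d : ℝ) + 1) * ε * Real.exp (-δ / (6 * Real.exp 1 * ε))) ∧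
      (∃ Φ : CPhase d → CPhase d,
        (∀ x ∈ D₀, ∃ γ : ℝ → CPhase d, γ 0 = x ∧ γ 1 = Φ x ∧
          ∀ t ∈ Set.Icc (0 : ℝ) 1, γ t ∈ D₁ ∧ HasDerivAt γ (hamVF d H (γ t)) t) ∧
        ∀ x ∈ D₀, ‖Φ x - f x‖ ≤
          5 * Real.exp ((d : ℝ) + 1) * ε * Real.exp (-δ / (6 * Real.exp 1 * ε))) ∧
      (∀ x ∈ D₁, ‖hamVF d H x‖ ≤ 4 * ε) ∧
      (∀ x ∈ D₁, ‖hamVF d H x - hamVF d S x‖ ≤ 17 * ((d : ℝ) + 3) ^ 2 * ε ^ 2 / δ) := by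
  subst hD hD₁
  have hroom := six_exp_one_mul_le_of_eq_floor hd hε hmdef
  have hS' := smallGenerator_of_max_norm_le hε hS hεub
  have hD₁ : ∀ x ∈ Metric.cthickening (δ / 2) D₀,
      Metric.closedBall x (δ / 2) ⊆ Metric.cthickening δ D₀ := fun x hx =>
    closedBall_subset_of_mem_cthickening hx (half_pos hδ).le (half_pos hδ).le (add_halves δ).le
  have hfF : ∀ x ∈ Metric.thickening (3 * δ / 4) D₀,
      generatedFamily S (Metric.cthickening δ D₀) (1, x) = f x := fun x hx =>
    hS'.generatedFamily_one_eq (hS'.one_mem_paramRoom hroom hx) (hf x hx).1 (hf x hx).2.1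
      (hf x hx).2.2
  choose! γ hγ0 hγ hγ1 using fun x (hx : x ∈ D₀) => hS'.exists_hasDerivAt_embeddingHam hm hroom
    (Metric.closedBall_subset_cthickening hx δ)
  refine ⟨embeddingHam S (Metric.cthickening δ D₀) m,
    fun x hx => hS'.analyticAt_embeddingHam (half_pos hδ) (hD₁ x hx), fun x hx => ?_,
    ⟨fun x => γ x 1, fun x hx => ⟨γ x, hγ0 x hx, rfl, fun t ht => ⟨?_, (hγ x hx t ht).2⟩⟩,
      fun x hx => ?_⟩,
    fun x hx => hS'.norm_hamVF_embeddingHam_le hroom (hD₁ x hx), fun x hx => ?_⟩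
  · rw [hS'.interpVF_eq_interpField_generatedFamily hroom hfF hx]
    exact (hS'.norm_hamVF_embeddingHam_sub_interpField_le hroom (hD₁ x hx)).trans
      (mul_exp_neg_le_of_eq_floor zero_le_four hε hmdef)
  · exact Metric.closedBall_subset_cthickening hx _ (hγ x hx t ht).1
  · rw [← hfF x (Metric.self_subset_thickening (by positivity) D₀ hx)]
    exact (hγ1 x hx).trans (mul_exp_neg_le_of_eq_floor (by norm_num) hε hmdef)
  · refine (hS'.norm_hamVF_embeddingHam_sub_hamVF_le hm hroom (hD₁ x hx)).trans ?_
    gcongr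
    nlinarith [Nat.cast_nonneg (α := ℝ) d]
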